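/- arXiv:2409.18251 — 2 statements merged into one kernel-verified Lean document; each statement's English description precedes it below -/
import Mathlib

section
/- (Theorem 2.) Let K be an imaginary quadratic number field, with ring of integers O_K, discriminant D_K, and for x ∈ O_K ∖ {0} let d_K(x) = Card{e ∈ O_K ∖ {0} : e ∣ x}. Let ζ_K(2) = ∑_𝔞 (N𝔞)^{−2}, the sum ranging over all nonzero ideals 𝔞 of O_K, where N𝔞 = [O_K : 𝔞]. Then, as X → +∞, ∑ d_K(x)·d_K(x+1) taken over all x ∈ O_K ∖ {0, −1} with |N_{K/ℚ}(x)| ≤ X equals (8π³ / (|D_K|^{3/2} ζ_K(2))) · X (log X)² + O(X log X). -/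
open scoped NumberField

/-- The naive number-of-divisors function on the ring of integers of a number field:
`dK x` is the number of nonzero divisors of `x`. -/
noncomputable def dK (K : Type*) [Field K] [NumberField K] (x : 𝓞 K) : ℕ :=
  {e : 𝓞 K | e ≠ 0 ∧ e ∣ x}.ncard

/-- The value `ζ_K(2) = ∑_𝔞 (N𝔞)⁻²`, the sum ranging over the nonzero ideals of `𝓞 K`. -/
noncomputable def zetaKTwo (K : Type*) [Field K] [NumberField K] : ℝ :=
  ∑' I : {I : Ideal (𝓞 K) // I ≠ ⊥}, ((Ideal.absNorm (I : Ideal (𝓞 K)) : ℝ) ^ 2)⁻¹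

lemma lattice_count {E : Type*} [NormedAddCommGroup E] [NormedSpace ℝ E] [FiniteDimensional ℝ E]
    [MeasurableSpace E] [BorelSpace E] (μ : MeasureTheory.Measure E) [μ.IsAddHaarMeasure]
    {ι : Type*} [Fintype ι] (b : Module.Basis ι ℝ E) (κ : ℝ) (hκ0 : 0 ≤ κ)
    (hκ : ∀ r : ℝ, 0 ≤ r → μ.real (Metric.closedBall (0 : E) r) = κ * r ^ 2) :
    ∃ C : ℝ, 0 ≤ C ∧ ∀ z : E, ∀ r : ℝ, 0 ≤ r →
      {v : E | v ∈ Submodule.span ℤ (Set.range b) ∧ ‖v + z‖ ≤ r}.Finite ∧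
      |({v : E | v ∈ Submodule.span ℤ (Set.range b) ∧ ‖v + z‖ ≤ r}.ncard : ℝ) *
        μ.real (ZSpan.fundamentalDomain b) - κ * r ^ 2| ≤ C * (r + 1) := by
  set δ : ℝ := ∑ i, ‖b i‖ with hδ
  have hδ0 : 0 ≤ δ := Finset.sum_nonneg fun i _ => norm_nonneg _
  refine ⟨κ * (2 * δ + δ ^ 2), by positivity, fun z r hr => ?_⟩
  have hcb : ∀ r : ℝ, 0 ≤ r → μ.real (Metric.closedBall (-z) r) = κ * r ^ 2 := by
    intro r hr
    rw [← hκ r hr, MeasureTheory.measureReal_def, MeasureTheory.measureReal_def,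
      MeasureTheory.Measure.addHaar_closedBall_center]
  set A := {v : E | v ∈ Submodule.span ℤ (Set.range b) ∧ ‖v + z‖ ≤ r} with hA
  have hfin : A.Finite := by
    have := ZSpan.setFinite_inter b (s := Metric.closedBall (-z) r) Metric.isBounded_closedBall
    refine this.subset ?_
    rintro v ⟨h1, h2⟩
    refine ⟨?_, h1⟩
    rw [mem_closedBall_iff_norm]; simpa using h2
  refine ⟨hfin, ?_⟩
  set F := ZSpan.fundamentalDomain b with hF
  have hFm : MeasurableSet F := ZSpan.fundamentalDomain_measurableSet b
  have hFb : ∀ x ∈ F, ‖x‖ ≤ δ := by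
    intro x hx
    rw [← (ZSpan.fract_eq_self (b := b)).2 hx]
    exact ZSpan.norm_fract_le b x
  set U : Set E := ⋃ v ∈ hfin.toFinset, (fun x => -v + x) ⁻¹' F with hU
  have hUvol : μ.real U = A.ncard * μ.real F := by
    rw [hU, MeasureTheory.measureReal_biUnion_finset (h := ?_)]
    · have : ∀ v ∈ hfin.toFinset, μ.real ((fun x => -v + x) ⁻¹' F) = μ.real F := by
        intro v _
        rw [MeasureTheory.measureReal_def, MeasureTheory.measure_preimage_add]; rfl
      rw [Finset.sum_congr rfl this, Finset.sum_const, nsmul_eq_mul, Set.ncard_eq_toFinset_card A hfin]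
    · intro v hv w hw hvw
      rw [Function.onFun, Set.disjoint_left]
      intro x hx hx'
      apply hvw
      have hv' : v ∈ A := by simpa using hv
      have hw' : w ∈ A := by simpa using hw
      simp only [Set.mem_preimage] at hx hx'
      have h1 := (ZSpan.fract_eq_self (b := b)).2 hx
      have h2 := (ZSpan.fract_eq_self (b := b)).2 hx'
      rw [ZSpan.fract_zSpan_add b _ (neg_mem hv'.1)] at h1
      rw [ZSpan.fract_zSpan_add b _ (neg_mem hw'.1)] at h2
      rw [h1] at h2
      simpa using h2
    · intro v _
      exact hFm.preimage (measurable_const_add _)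
    · intro v _
      rw [MeasureTheory.measure_preimage_add]
      exact (ZSpan.fundamentalDomain_isBounded b).measure_lt_top.ne
  have hUsub : U ⊆ Metric.closedBall (-z) (r + δ) := by
    intro x hx
    simp only [hU, Set.mem_iUnion, Set.mem_preimage, Set.Finite.mem_toFinset] at hx
    obtain ⟨v, hv, hx⟩ := hx
    rw [mem_closedBall_iff_norm]
    calc ‖x - -z‖ = ‖(v + z) + (-v + x)‖ := by congr 1; abel
      _ ≤ _ := (norm_add_le _ _).trans (add_le_add hv.2 (hFb _ hx))
  have hUsup : ∀ s, s + δ ≤ r → Metric.closedBall (-z) s ⊆ U := by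
    intro s hs x hx
    rw [mem_closedBall_iff_norm] at hx
    simp only [hU, Set.mem_iUnion, Set.mem_preimage, Set.Finite.mem_toFinset]
    have hfl : -(ZSpan.floor b x : E) + x = ZSpan.fract b x := by
      rw [ZSpan.fract_apply]; abel
    refine ⟨(ZSpan.floor b x : E), ⟨(ZSpan.floor b x).2, ?_⟩, ?_⟩
    · have : (ZSpan.floor b x : E) + z = (x - -z) - ZSpan.fract b x := by
        rw [← hfl]; abel
      rw [this]
      exact (norm_sub_le _ _).trans ((add_le_add hx (ZSpan.norm_fract_le b x)).trans hs)
    · rw [hfl]; exact ZSpan.fract_mem_fundamentalDomain b x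
  rw [← hUvol]
  have hup : μ.real U ≤ κ * (r + δ) ^ 2 := by
    rw [← hcb _ (by positivity)]
    exact MeasureTheory.measureReal_mono hUsub Metric.isBounded_closedBall.measure_lt_top.ne
  have hUfin : μ U ≠ ⊤ :=
    ((MeasureTheory.measure_mono hUsub).trans_lt Metric.isBounded_closedBall.measure_lt_top).ne
  have hU0 : 0 ≤ μ.real U := MeasureTheory.measureReal_nonneg
  have e1 : 0 ≤ κ * δ := by positivity
  have e2 : 0 ≤ κ * δ * r := by positivity
  have e3 : 0 ≤ κ * δ ^ 2 := by positivity
  have e4 : 0 ≤ κ * δ ^ 2 * r := by positivity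
  rw [abs_le]
  constructor
  · rcases le_total δ r with h | h
    · have : κ * (r - δ) ^ 2 ≤ μ.real U := by
        rw [← hcb _ (by linarith)]
        exact MeasureTheory.measureReal_mono (hUsup _ (by linarith)) hUfin
      nlinarith
    · have : κ * r ^ 2 ≤ κ * δ ^ 2 := by gcongr
      nlinarith
  · nlinarith

section P2
open scoped Classical
open NumberField NumberField.mixedEmbedding NumberField.InfinitePlace

/-- absolute norm as a real number -/
noncomputable def nmK {K : Type*} [Field K] [NumberField K] (x : K) : ℝ :=
  |((Algebra.norm ℚ x : ℚ) : ℝ)|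

/-- density of the lattice of integers -/
noncomputable def cK (K : Type*) [Field K] [NumberField K] : ℝ :=
  2 * Real.pi / Real.sqrt |(NumberField.discr K : ℝ)|

variable {K : Type*} [Field K] [NumberField K]

lemma nmK_mul (x y : K) : nmK (x * y) = nmK x * nmK y := by
  simp [nmK, abs_mul]

lemma nmK_nonneg (x : K) : 0 ≤ nmK x := abs_nonneg _

lemma nmK_zero : nmK (0 : K) = 0 := by
  simp [nmK]

lemma nmK_one : nmK (1 : K) = 1 := by
  simp [nmK]

lemma nmK_pos {x : K} (hx : x ≠ 0) : 0 < nmK x := by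
  have : Algebra.norm ℚ x ≠ 0 := Algebra.norm_ne_zero_iff.2 hx
  exact abs_pos.2 (by exact_mod_cast this)

lemma nmK_inv (x : K) : nmK x⁻¹ = (nmK x)⁻¹ := by
  rcases eq_or_ne x 0 with rfl | hx
  · simp [nmK_zero]
  · apply eq_inv_of_mul_eq_one_left
    rw [← nmK_mul, inv_mul_cancel₀ hx, nmK_one]

lemma cK_pos : 0 < cK K := by
  have : (NumberField.discr K : ℝ) ≠ 0 := by exact_mod_cast NumberField.discr_ne_zero K
  unfold cK; positivity

lemma noReal (himag : IsEmpty (K →+* ℝ)) : nrRealPlaces K = 0 := by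
  rw [nrRealPlaces, Fintype.card_eq_zero_iff]
  exact ⟨fun w => himag.false (embedding_of_isReal w.2)⟩

lemma oneComplex (hdeg : Module.finrank ℚ K = 2) (himag : IsEmpty (K →+* ℝ)) :
    nrComplexPlaces K = 1 := by
  have := card_add_two_mul_card_eq_rank K
  rw [noReal himag, hdeg] at this
  omega

lemma exists_place (hdeg : Module.finrank ℚ K = 2) (himag : IsEmpty (K →+* ℝ)) :
    ∃ w : InfinitePlace K, w.IsComplex ∧ ∀ v : InfinitePlace K, v = w := by
  have h := oneComplex hdeg himag
  rw [nrComplexPlaces, Fintype.card_eq_one_iff] at h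
  obtain ⟨w, hw⟩ := h
  refine ⟨w.1, w.2, fun v => ?_⟩
  have hv : v.IsComplex := by
    rw [← not_isReal_iff_isComplex]
    intro hv
    exact himag.false (embedding_of_isReal hv)
  exact congrArg Subtype.val (hw ⟨v, hv⟩)

lemma nmK_eq (hdeg : Module.finrank ℚ K = 2) (himag : IsEmpty (K →+* ℝ)) (x : K) :
    nmK x = ‖mixedEmbedding K x‖ ^ 2 := by
  obtain ⟨w, hw, huniq⟩ := exists_place hdeg himag
  have huniv : (Finset.univ : Finset (InfinitePlace K)) = {w} := by
    ext v; simp [huniq v]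
  have h1 := norm_eq_norm x
  rw [mixedEmbedding.norm_apply, huniv, Finset.prod_singleton] at h1
  have h2 : ‖mixedEmbedding K x‖ = normAtPlace w (mixedEmbedding K x) := by
    rw [norm_eq_sup'_normAtPlace]
    simp [huniv]
  have h3 : w.mult = 2 := mult_isComplex ⟨w, hw⟩
  rw [h3] at h1
  rw [h2, h1, nmK]
  push_cast; rfl

lemma nmK_add_le (hdeg : Module.finrank ℚ K = 2) (himag : IsEmpty (K →+* ℝ)) (x y : K) :
    √(nmK (x + y)) ≤ √(nmK x) + √(nmK y) := by
  simp only [nmK_eq hdeg himag, Real.sqrt_sq (norm_nonneg _), map_add]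
  exact norm_add_le _ _

lemma vol_ball (hdeg : Module.finrank ℚ K = 2) (himag : IsEmpty (K →+* ℝ)) (r : ℝ) (hr : 0 ≤ r) :
    (MeasureTheory.volume : MeasureTheory.Measure (mixedSpace K)).real
      (Metric.closedBall 0 r) = Real.pi * r ^ 2 := by
  have hball : Metric.ball (0 : mixedSpace K) 1 = convexBodyLT K (fun _ => 1) := by
    rw [convexBodyLT, show (0 : mixedSpace K) = (0, 0) from rfl, ← ball_prod_same,
      ball_pi _ one_pos, ball_pi _ one_pos]
    simp
  rw [MeasureTheory.measureReal_def, MeasureTheory.Measure.addHaar_closedBall _ _ hr, hball,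
    convexBodyLT_volume, mixedEmbedding.finrank, hdeg, convexBodyLTFactor, noReal himag,
    oneComplex hdeg himag]
  simp [hr, mul_comm]

lemma vol_fund (hdeg : Module.finrank ℚ K = 2) (himag : IsEmpty (K →+* ℝ))
    (I : nonZeroDivisors (Ideal (𝓞 K))) :
    (MeasureTheory.volume : MeasureTheory.Measure (mixedSpace K)).real
      (ZSpan.fundamentalDomain (fractionalIdealLatticeBasis K (FractionalIdeal.mk0 K I))) =
      Real.pi * Ideal.absNorm (I : Ideal (𝓞 K)) / cK K := by
  rw [MeasureTheory.measureReal_def, volume_fundamentalDomain_fractionalIdealLatticeBasis,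
    volume_fundamentalDomain_latticeBasis, oneComplex hdeg himag, FractionalIdeal.coe_mk0,
    FractionalIdeal.coeIdeal_absNorm, cK]
  simp only [ENNReal.toReal_mul, ENNReal.coe_toReal, Real.coe_sqrt, coe_nnnorm,
    Int.norm_eq_abs, pow_one, ENNReal.toReal_inv, ENNReal.toReal_ofNat, Rat.cast_natCast]
  rw [ENNReal.toReal_ofReal (by positivity)]
  have := Real.pi_pos.ne'
  field_simp

lemma count_fixed (hdeg : Module.finrank ℚ K = 2) (himag : IsEmpty (K →+* ℝ))
    (I : nonZeroDivisors (Ideal (𝓞 K))) :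
    ∃ C : ℝ, 0 ≤ C ∧ ∀ z : K, ∀ R : ℝ, 0 ≤ R →
      {a : 𝓞 K | a ∈ (I : Ideal (𝓞 K)) ∧ nmK ((a : K) + z) ≤ R}.Finite ∧
      |({a : 𝓞 K | a ∈ (I : Ideal (𝓞 K)) ∧ nmK ((a : K) + z) ≤ R}.ncard : ℝ) -
        cK K * R / Ideal.absNorm (I : Ideal (𝓞 K))| ≤ C * (√R + 1) := by
  obtain ⟨C, hC, H⟩ := lattice_count (MeasureTheory.volume : MeasureTheory.Measure (mixedSpace K))
    (fractionalIdealLatticeBasis K (FractionalIdeal.mk0 K I)) Real.pi Real.pi_pos.le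
    (vol_ball hdeg himag)
  rw [vol_fund hdeg himag] at H
  have hN : 0 < (Ideal.absNorm (I : Ideal (𝓞 K)) : ℝ) := by
    have : Ideal.absNorm (I : Ideal (𝓞 K)) ≠ 0 := by
      rw [Ne, Ideal.absNorm_eq_zero_iff]; exact nonZeroDivisors.coe_ne_zero I
    positivity
  set V : ℝ := Real.pi * Ideal.absNorm (I : Ideal (𝓞 K)) / cK K with hV
  have hVpos : 0 < V := by have := cK_pos (K := K); positivity
  refine ⟨C / V, by positivity, fun z R hR => ?_⟩
  obtain ⟨hfin, hb⟩ := H (mixedEmbedding K z) (√R) (Real.sqrt_nonneg _)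
  set S := {v : mixedSpace K | v ∈ Submodule.span ℤ (Set.range
    (fractionalIdealLatticeBasis K (FractionalIdeal.mk0 K I))) ∧ ‖v + mixedEmbedding K z‖ ≤ √R}
  set T := {a : 𝓞 K | a ∈ (I : Ideal (𝓞 K)) ∧ nmK ((a : K) + z) ≤ R}
  have hinj : Function.Injective (fun a : 𝓞 K => mixedEmbedding K (a : K)) := by
    intro a b hab
    exact RingOfIntegers.ext ((mixedEmbedding K).injective hab)
  have himage : (fun a : 𝓞 K => mixedEmbedding K (a : K)) '' T = S := by
    ext v
    simp only [S, T, Set.mem_image, Set.mem_ofPred_eq, mem_span_fractionalIdealLatticeBasis]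
    constructor
    · rintro ⟨a, ⟨ha, ha'⟩, rfl⟩
      refine ⟨⟨(a : K), ?_, rfl⟩, ?_⟩
      · simpa using ha
      · rw [← map_add]
        apply Real.le_sqrt_of_sq_le
        rwa [← nmK_eq hdeg himag]
    · rintro ⟨⟨x, hx, rfl⟩, hv⟩
      rw [FractionalIdeal.coe_mk0] at hx
      obtain ⟨a, ha, rfl⟩ := (FractionalIdeal.mem_coeIdeal _).1 hx
      refine ⟨a, ⟨ha, ?_⟩, rfl⟩
      rw [nmK_eq hdeg himag, map_add]
      exact (Real.le_sqrt (norm_nonneg _) hR).1 hv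
  have hTfin : T.Finite := by
    rw [← himage] at hfin
    exact hfin.of_finite_image hinj.injOn
  refine ⟨hTfin, ?_⟩
  have hcard : S.ncard = T.ncard := by
    rw [← himage, Set.ncard_image_of_injective _ hinj]
  rw [hcard, Real.sq_sqrt hR] at hb
  have : (T.ncard : ℝ) - cK K * R / Ideal.absNorm (I : Ideal (𝓞 K)) =
      ((T.ncard : ℝ) * V - Real.pi * R) / V := by
    rw [hV]
    have := cK_pos (K := K)
    have := Real.pi_pos
    field_simp
  rw [this, abs_div, abs_of_pos hVpos, div_mul_eq_mul_div]
  gcongr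


lemma nmK_eq_absNorm (a : 𝓞 K) : nmK (a : K) = (Ideal.absNorm (Ideal.span {a}) : ℝ) := by
  rw [Ideal.absNorm_span_singleton, nmK, ← Algebra.coe_norm_int, Nat.cast_natAbs]
  simp

lemma absNorm_pos {I : Ideal (𝓞 K)} (hI : I ≠ ⊥) : 0 < (Ideal.absNorm I : ℝ) := by
  have : Ideal.absNorm I ≠ 0 := by rwa [Ne, Ideal.absNorm_eq_zero_iff]
  positivity

lemma count_unif (hdeg : Module.finrank ℚ K = 2) (himag : IsEmpty (K →+* ℝ)) :
    ∃ C : ℝ, 0 ≤ C ∧ ∀ I : Ideal (𝓞 K), I ≠ ⊥ → ∀ c : 𝓞 K, ∀ R : ℝ, 0 ≤ R →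
      {x : 𝓞 K | x - c ∈ I ∧ nmK (x : K) ≤ R}.Finite ∧
      |({x : 𝓞 K | x - c ∈ I ∧ nmK (x : K) ≤ R}.ncard : ℝ) -
        cK K * R / Ideal.absNorm I| ≤ C * (√(R / Ideal.absNorm I) + 1) := by
  choose J hJ using ClassGroup.mk0_surjective (R := 𝓞 K)
  choose C hC H using fun Q => count_fixed hdeg himag (J Q)
  refine ⟨∑ Q, C Q * (√(Ideal.absNorm (J Q : Ideal (𝓞 K))) + 1),
    Finset.sum_nonneg fun Q _ => mul_nonneg (hC Q) (by positivity), fun I hI c R hR => ?_⟩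
  have hI0 := absNorm_pos hI
  set I' : nonZeroDivisors (Ideal (𝓞 K)) := ⟨I, mem_nonZeroDivisors_of_ne_zero hI⟩ with hI'
  set Q := ClassGroup.mk0 I' with hQ
  have hJ0 := absNorm_pos (nonZeroDivisors.coe_ne_zero (J Q))
  obtain ⟨α, β, hα, hβ, hαβ⟩ := ClassGroup.mk0_eq_mk0_iff.1 (hJ Q).symm
  have hαβ : Ideal.span {α} * I = Ideal.span {β} * (J Q : Ideal (𝓞 K)) := hαβ
  have hα0 : 0 < nmK (α : K) := nmK_pos (by simpa using hα)
  have hβ0 : 0 < nmK (β : K) := nmK_pos (by simpa using hβ)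
  have hNN : nmK (α : K) * Ideal.absNorm I = nmK (β : K) * Ideal.absNorm (J Q : Ideal (𝓞 K)) := by
    rw [nmK_eq_absNorm, nmK_eq_absNorm, ← Nat.cast_mul, ← Nat.cast_mul, ← map_mul, ← map_mul, hαβ]
  set R' : ℝ := R / Ideal.absNorm I * Ideal.absNorm (J Q : Ideal (𝓞 K)) with hR'
  have hRR : nmK (β : K) * R' = nmK (α : K) * R := by
    rw [hR', mul_comm (_ / _), ← mul_assoc, ← hNN]; field_simp
  set z : K := (α : K) / β * c with hz
  obtain ⟨hfin, hb⟩ := H Q z R' (by positivity)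
  set T := {a : 𝓞 K | a ∈ (J Q : Ideal (𝓞 K)) ∧ nmK ((a : K) + z) ≤ R'}
  set S := {x : 𝓞 K | x - c ∈ I ∧ nmK (x : K) ≤ R}
  have hβK : (β : K) ≠ 0 := by simpa using hβ
  have hαK : (α : K) ≠ 0 := by simpa using hα
  have hinj1 : Function.Injective (fun x : 𝓞 K => α * (x - c)) := by
    intro x y h; simpa [hα] using h
  have hinj2 : Function.Injective (fun a : 𝓞 K => β * a) := by
    intro x y h; simpa [hβ] using h
  have key : ∀ x a : 𝓞 K, α * (x - c) = β * a → (nmK (x : K) ≤ R ↔ nmK ((a : K) + z) ≤ R') := by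
    intro x a hxa
    have e1 : (a : K) + z = (α : K) / β * x := by
      have : (α : K) * (x - c) = β * a := by exact_mod_cast congrArg (fun t : 𝓞 K => (t : K)) hxa
      rw [hz]; field_simp; linear_combination -this
    have e2 : nmK (β : K) * nmK ((a : K) + z) = nmK (α : K) * nmK (x : K) := by
      rw [e1, ← nmK_mul, ← nmK_mul]; congr 1; field_simp
    constructor
    · intro h
      refine le_of_mul_le_mul_left ?_ hβ0
      rw [e2, hRR]; gcongr
    · intro h
      refine le_of_mul_le_mul_left ?_ hα0
      rw [← e2, ← hRR]; gcongr
  have himg : (fun x : 𝓞 K => α * (x - c)) '' S = (fun a : 𝓞 K => β * a) '' T := by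
    ext u
    constructor
    · rintro ⟨x, ⟨hx1, hx2⟩, rfl⟩
      have : α * (x - c) ∈ Ideal.span {β} * (J Q : Ideal (𝓞 K)) := by
        rw [← hαβ]; exact Ideal.mul_mem_mul (Ideal.mem_span_singleton_self α) hx1
      obtain ⟨a, ha, hau⟩ := Ideal.mem_span_singleton_mul.1 this
      exact ⟨a, ⟨ha, (key x a hau.symm).1 hx2⟩, hau⟩
    · rintro ⟨a, ⟨ha1, ha2⟩, rfl⟩
      have : β * a ∈ Ideal.span {α} * I := by
        rw [hαβ]; exact Ideal.mul_mem_mul (Ideal.mem_span_singleton_self β) ha1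
      obtain ⟨y, hy, hyu⟩ := Ideal.mem_span_singleton_mul.1 this
      refine ⟨y + c, ⟨by simpa using hy, (key (y + c) a (by simpa using hyu)).2 ha2⟩, by simpa using hyu⟩
  have hSfin : S.Finite := by
    have := hfin.image (fun a : 𝓞 K => β * a)
    rw [← himg] at this
    exact this.of_finite_image hinj1.injOn
  refine ⟨hSfin, ?_⟩
  have hcard : S.ncard = T.ncard := by
    rw [← Set.ncard_image_of_injective S hinj1, himg, Set.ncard_image_of_injective _ hinj2]
  rw [hcard]
  have e3 : cK K * R / Ideal.absNorm I = cK K * R' / Ideal.absNorm (J Q : Ideal (𝓞 K)) := by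
    rw [hR']; field_simp
  rw [e3]
  refine hb.trans ?_
  calc C Q * (√R' + 1) ≤ C Q * (√(Ideal.absNorm (J Q : Ideal (𝓞 K))) + 1) *
        (√(R / Ideal.absNorm I) + 1) := by
        rw [mul_assoc]
        refine mul_le_mul_of_nonneg_left ?_ (hC Q)
        rw [hR', Real.sqrt_mul (by positivity)]
        nlinarith [Real.sqrt_nonneg (R / Ideal.absNorm I),
          Real.sqrt_nonneg (Ideal.absNorm (J Q : Ideal (𝓞 K)) : ℝ)]
    _ ≤ _ := by
        refine mul_le_mul_of_nonneg_right ?_ (by positivity)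
        exact Finset.single_le_sum (f := fun Q => C Q * (√(Ideal.absNorm (J Q : Ideal (𝓞 K))) + 1))
          (fun Q _ => mul_nonneg (hC Q) (by positivity)) (Finset.mem_univ Q)

end P2

section P3
open scoped Classical
open NumberField

lemma sqrt_tele (x : ℝ) (hx : 0 < x) :
    √x / (x * (x + 1)) ≤ 2 / √x - 2 / √(x + 1) := by
  have h1 : 0 < √x := Real.sqrt_pos.2 hx
  have h2 : 0 < √(x + 1) := Real.sqrt_pos.2 (by linarith)
  have h3 : √x ≤ √(x + 1) := Real.sqrt_le_sqrt (by linarith)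
  have e1 : √x ^ 2 = x := Real.sq_sqrt hx.le
  have e2 : √(x + 1) ^ 2 = x + 1 := Real.sq_sqrt (by linarith)
  set s := √x
  set t := √(x + 1)
  have e3 : x * (x + 1) = s ^ 2 * t ^ 2 := by rw [e1, e2]
  have e4 : (t - s) * (t + s) = 1 := by nlinarith
  rw [e3]
  have e5 : s / (s ^ 2 * t ^ 2) = 1 / (s * t ^ 2) := by field_simp
  have e6 : 2 / s - 2 / t = 2 * (t - s) / (s * t) := by field_simp
  rw [e5, e6, div_le_div_iff₀ (by positivity) (by positivity)]
  have e7 : t * (t + s) ≤ 2 * t ^ 2 := by nlinarith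
  have e8 : t ≤ 2 * (t - s) * t ^ 2 := by
    have : t = (t - s) * (t * (t + s)) := by linear_combination (-t) * e4
    calc t = (t - s) * (t * (t + s)) := this
      _ ≤ (t - s) * (2 * t ^ 2) := mul_le_mul_of_nonneg_left e7 (by linarith)
      _ = _ := by ring
  nlinarith

lemma abel_bound (b : ℕ → ℝ) (C : ℝ) (hC : 0 ≤ C)
    (h : ∀ M : ℕ, 1 ≤ M → |∑ m ∈ Finset.Icc 1 M, b m| ≤ C * √M) (M : ℕ) :
    |∑ m ∈ Finset.Icc 1 M, b m / m| ≤ 3 * C := by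
  have key : ∀ M : ℕ, |∑ m ∈ Finset.Icc 1 M, b m / m - (∑ m ∈ Finset.Icc 1 M, b m) / (M + 1)| ≤
      C * (2 - 2 / √((M : ℝ) + 1)) := by
    intro M
    induction M with
    | zero => simp
    | succ n ih =>
      rw [Finset.sum_Icc_succ_top (by omega), Finset.sum_Icc_succ_top (by omega)]
      have hB := h (n + 1) (by omega)
      rw [Finset.sum_Icc_succ_top (by omega)] at hB
      set A := ∑ m ∈ Finset.Icc 1 n, b m / m
      set B := ∑ m ∈ Finset.Icc 1 n, b m
      have hn : (0 : ℝ) < (n : ℝ) + 1 := by positivity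
      have e : A + b (n + 1) / ((n + 1 : ℕ) : ℝ) - (B + b (n + 1)) / (((n + 1 : ℕ) : ℝ) + 1) =
          (A - B / (n + 1)) + (B + b (n + 1)) / (((n : ℝ) + 1) * ((n : ℝ) + 1 + 1)) := by
        push_cast; field_simp; ring
      rw [e]
      refine (abs_add_le _ _).trans ?_
      have h2 : |(B + b (n + 1)) / (((n : ℝ) + 1) * ((n : ℝ) + 1 + 1))| ≤
          C * (2 / √((n : ℝ) + 1) - 2 / √((n : ℝ) + 1 + 1)) := by
        rw [abs_div, abs_of_pos (show 0 < ((n : ℝ) + 1) * ((n : ℝ) + 1 + 1) by positivity)]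
        calc _ ≤ C * √((n + 1 : ℕ) : ℝ) / (((n : ℝ) + 1) * ((n : ℝ) + 1 + 1)) := by gcongr
          _ = C * (√((n : ℝ) + 1) / (((n : ℝ) + 1) * ((n : ℝ) + 1 + 1))) := by push_cast; ring
          _ ≤ _ := mul_le_mul_of_nonneg_left (sqrt_tele _ hn) hC
      push_cast
      linarith
  rcases Nat.eq_zero_or_pos M with rfl | hM
  · simpa using hC
  have h1 := key M
  have h2 : |(∑ m ∈ Finset.Icc 1 M, b m) / ((M : ℝ) + 1)| ≤ C := by
    rw [abs_div, abs_of_pos (show (0 : ℝ) < (M : ℝ) + 1 by positivity), div_le_iff₀ (by positivity)]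
    refine (h M hM).trans (mul_le_mul_of_nonneg_left ?_ hC)
    rw [Real.sqrt_le_left (by positivity)]
    nlinarith [show (0 : ℝ) ≤ M by positivity]
  have h3 : C * (2 - 2 / √((M : ℝ) + 1)) ≤ 2 * C := by
    have : 0 ≤ C * (2 / √((M : ℝ) + 1)) := by positivity
    nlinarith
  have := abs_add_le (∑ m ∈ Finset.Icc 1 M, b m / m - (∑ m ∈ Finset.Icc 1 M, b m) / ((M : ℝ) + 1))
    ((∑ m ∈ Finset.Icc 1 M, b m) / ((M : ℝ) + 1))
  rw [sub_add_cancel] at this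
  linarith

lemma harmonic_log (T : ℝ) (hT : 1 ≤ T) :
    |∑ m ∈ Finset.Icc 1 ⌊T⌋₊, (1 : ℝ) / m - Real.log T| ≤ 1 := by
  have hM : 1 ≤ ⌊T⌋₊ := Nat.le_floor (by simpa using hT)
  have hM' : (1 : ℝ) ≤ (⌊T⌋₊ : ℝ) := by exact_mod_cast hM
  have h1 := log_add_one_le_harmonic ⌊T⌋₊
  have h2 := harmonic_le_one_add_log ⌊T⌋₊
  rw [harmonic_eq_sum_Icc] at h1 h2
  push_cast at h1 h2
  simp only [one_div]
  have h3 : Real.log T ≤ Real.log (⌊T⌋₊ + 1) :=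
    Real.log_le_log (by linarith) (Nat.lt_floor_add_one T).le
  have h4 : Real.log ⌊T⌋₊ ≤ Real.log T :=
    Real.log_le_log (by linarith) (Nat.floor_le (by linarith))
  rw [abs_le]; constructor <;> linarith

variable {K : Type*} [Field K] [NumberField K]

/-- nonzero integers of norm at most `Y` -/
noncomputable def BK (K : Type*) [Field K] [NumberField K] (Y : ℝ) : Finset (𝓞 K) :=
  if h : {x : 𝓞 K | x ≠ 0 ∧ nmK (x : K) ≤ Y}.Finite then h.toFinset else ∅

lemma finite_ball (hdeg : Module.finrank ℚ K = 2) (himag : IsEmpty (K →+* ℝ)) (Y : ℝ) :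
    {x : 𝓞 K | nmK (x : K) ≤ Y}.Finite := by
  obtain ⟨C, hC, H⟩ := count_unif hdeg himag
  refine (H ⊤ (by simp) 0 (max Y 0) (le_max_right _ _)).1.subset ?_
  intro x hx
  exact ⟨trivial, le_trans hx (le_max_left _ _)⟩

lemma mem_BK (hdeg : Module.finrank ℚ K = 2) (himag : IsEmpty (K →+* ℝ)) {Y : ℝ} {x : 𝓞 K} :
    x ∈ BK K Y ↔ x ≠ 0 ∧ nmK (x : K) ≤ Y := by
  have h : {x : 𝓞 K | x ≠ 0 ∧ nmK (x : K) ≤ Y}.Finite :=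
    (finite_ball hdeg himag Y).subset fun x hx => hx.2
  rw [BK, dif_pos h]; simp

lemma one_le_nmK {x : 𝓞 K} (hx : x ≠ 0) : 1 ≤ nmK (x : K) := by
  have h : 0 < nmK (x : K) := nmK_pos (by simpa using hx)
  rw [nmK_eq_absNorm] at h ⊢
  exact_mod_cast h

lemma exists_mul_absNorm {I : Ideal (𝓞 K)} {x : 𝓞 K} (hx : x ∈ I) (hx0 : x ≠ 0) :
    ∃ k : ℕ, 1 ≤ k ∧ nmK (x : K) = k * Ideal.absNorm I := by
  have h1 : I ∣ Ideal.span {x} := by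
    rw [Ideal.dvd_span_singleton]; exact hx
  obtain ⟨k, hk⟩ := map_dvd Ideal.absNorm h1
  have h2 : nmK (x : K) = k * Ideal.absNorm I := by
    rw [nmK_eq_absNorm, hk]; push_cast; ring
  refine ⟨k, ?_, h2⟩
  rcases Nat.eq_zero_or_pos k with rfl | h
  · have := one_le_nmK hx0
    rw [h2] at this; norm_num at this
  · exact h

/-- sum of inverse norms in an ideal -/
noncomputable def LK (I : Ideal (𝓞 K)) (Y : ℝ) : ℝ :=
  ∑ e ∈ (BK K Y).filter (fun e => e ∈ I), (nmK (e : K))⁻¹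

lemma LK_eq_zero (hdeg : Module.finrank ℚ K = 2) (himag : IsEmpty (K →+* ℝ))
    (I : Ideal (𝓞 K)) (Y : ℝ) (hY : Y < Ideal.absNorm I) : LK I Y = 0 := by
  rw [LK]
  convert Finset.sum_empty
  rw [Finset.filter_eq_empty_iff]
  intro x hx hxI
  rw [mem_BK hdeg himag] at hx
  obtain ⟨k, hk, hk'⟩ := exists_mul_absNorm hxI hx.1
  have : (1 : ℝ) ≤ k := by exact_mod_cast hk
  have h0 : (0 : ℝ) ≤ Ideal.absNorm I := by positivity
  nlinarith [hx.2]

lemma LK_bound (hdeg : Module.finrank ℚ K = 2) (himag : IsEmpty (K →+* ℝ)) :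
    ∃ C : ℝ, 0 ≤ C ∧ ∀ I : Ideal (𝓞 K), I ≠ ⊥ → ∀ Y : ℝ, (Ideal.absNorm I : ℝ) ≤ Y →
      |Ideal.absNorm I * LK I Y - cK K * Real.log (Y / Ideal.absNorm I)| ≤ C := by
  obtain ⟨C, hC, H⟩ := count_unif hdeg himag
  have hc := cK_pos (K := K)
  refine ⟨3 * (2 * C + 1) + cK K, by positivity, fun I hI Y hY => ?_⟩
  have hI0 := absNorm_pos hI
  set n : ℝ := ((Ideal.absNorm I : ℕ) : ℝ) with hn
  set F : ℕ → Finset (𝓞 K) := fun k =>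
    (BK K (k * n)).filter (fun e => e ∈ I ∧ nmK (e : K) = k * n) with hF
  set a : ℕ → ℝ := fun k => ((F k).card : ℝ) with ha
  choose! k hk1 hk2 using fun (x : 𝓞 K) (hx : x ∈ I) (hx0 : x ≠ 0) => exists_mul_absNorm hx hx0
  have hmaps : ∀ Z : ℝ, ∀ x ∈ (BK K Z).filter (fun e => e ∈ I), k x ∈ Finset.Icc 1 ⌊Z / n⌋₊ := by
    intro Z x hx
    rw [Finset.mem_filter, mem_BK hdeg himag] at hx
    obtain ⟨⟨hx0, hxZ⟩, hxI⟩ := hx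
    rw [Finset.mem_Icc]
    refine ⟨hk1 x hxI hx0, Nat.le_floor ?_⟩
    rw [le_div_iff₀ hI0, ← hk2 x hxI hx0]; exact hxZ
  have hfib : ∀ Z : ℝ, ∀ j ∈ Finset.Icc 1 ⌊Z / n⌋₊,
      ((BK K Z).filter (fun e => e ∈ I)).filter (fun e => k e = j) = F j := by
    intro Z j hj
    rw [Finset.mem_Icc] at hj
    have hj2 : (j : ℝ) * n ≤ Z := by
      rw [← le_div_iff₀ hI0]
      rcases le_or_gt 0 (Z / n) with h | h
      · exact (Nat.le_floor_iff h).1 hj.2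
      · rw [Nat.floor_of_nonpos h.le] at hj; omega
    ext x
    simp only [hF, Finset.mem_filter, mem_BK hdeg himag]
    constructor
    · rintro ⟨⟨⟨hx0, hxZ⟩, hxI⟩, rfl⟩
      have := hk2 x hxI hx0
      exact ⟨⟨hx0, this.le⟩, hxI, this⟩
    · rintro ⟨⟨hx0, hxZ⟩, hxI, hxj⟩
      refine ⟨⟨⟨hx0, hxZ.trans hj2⟩, hxI⟩, ?_⟩
      rw [hk2 x hxI hx0] at hxj
      exact_mod_cast mul_right_cancel₀ hI0.ne' hxj
  have hsum : ∀ M : ℕ, ∑ j ∈ Finset.Icc 1 M, a j =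
      (((BK K (M * n)).filter (fun e => e ∈ I)).card : ℝ) := by
    intro M
    have hfl : ⌊(M : ℝ) * n / n⌋₊ = M := by
      rw [mul_div_cancel_right₀ _ hI0.ne', Nat.floor_natCast]
    have h1 := Finset.card_eq_sum_card_fiberwise (f := k) (hmaps (M * n))
    rw [h1, hfl]
    push_cast
    refine Finset.sum_congr rfl fun j hj => ?_
    rw [hfib _ j (by rw [hfl]; exact hj)]
  have hB : ∀ M : ℕ, 1 ≤ M → |∑ j ∈ Finset.Icc 1 M, (a j - cK K)| ≤ (2 * C + 1) * √M := by
    intro M hM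
    have hM' : (1 : ℝ) ≤ M := by exact_mod_cast hM
    have hs : 1 ≤ √(M : ℝ) := by rwa [Real.one_le_sqrt]
    obtain ⟨hfin, hb⟩ := H I hI 0 (M * n) (by positivity)
    have hcard : {x : 𝓞 K | x - 0 ∈ I ∧ nmK (x : K) ≤ M * n}.ncard =
        ((BK K (M * n)).filter (fun e => e ∈ I)).card + 1 := by
      have : {x : 𝓞 K | x - 0 ∈ I ∧ nmK (x : K) ≤ M * n} =
          ((insert 0 ((BK K (M * n)).filter (fun e => e ∈ I)) : Finset (𝓞 K)) : Set (𝓞 K)) := by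
        ext x
        simp only [sub_zero, Set.mem_ofPred_eq, Finset.coe_insert, Finset.coe_filter,
          mem_BK hdeg himag, Set.mem_insert_iff]
        constructor
        · rintro ⟨h1, h2⟩
          by_cases hx : x = 0
          · exact Or.inl hx
          · exact Or.inr ⟨⟨hx, h2⟩, h1⟩
        · rintro (rfl | ⟨⟨h1, h2⟩, h3⟩)
          · refine ⟨I.zero_mem, ?_⟩
            have : nmK (((0 : 𝓞 K)) : K) = 0 := by simpa using nmK_zero (K := K)
            rw [this]; positivity
          · exact ⟨h3, h2⟩
      rw [this, Set.ncard_coe_finset, Finset.card_insert_of_notMem]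
      simp [mem_BK hdeg himag]
    rw [hcard, mul_div_cancel_right₀ _ hI0.ne'] at hb
    rw [Finset.sum_sub_distrib, hsum]
    simp only [Finset.sum_const, Nat.card_Icc, nsmul_eq_mul]
    have e1 : cK K * (M * n) / n = cK K * M := by field_simp
    rw [e1] at hb
    push_cast at hb
    rw [abs_le] at hb ⊢
    simp only [Nat.add_sub_cancel]
    constructor <;> nlinarith
  have hT : 1 ≤ Y / n := by rwa [one_le_div hI0]
  have hL : n * LK I Y = ∑ j ∈ Finset.Icc 1 ⌊Y / n⌋₊, a j / j := by
    rw [LK, ← Finset.sum_fiberwise_of_maps_to (hmaps Y), Finset.mul_sum]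
    refine Finset.sum_congr rfl fun j hj => ?_
    rw [hfib Y j hj]
    have hj0 : (0 : ℝ) < j := by exact_mod_cast (Finset.mem_Icc.1 hj).1
    have : ∀ e ∈ F j, (nmK (e : K))⁻¹ = ((j : ℝ) * n)⁻¹ := by
      intro e he
      rw [(Finset.mem_filter.1 he).2.2]
    rw [Finset.sum_congr rfl this, Finset.sum_const, nsmul_eq_mul]
    field_simp
    rfl
  have h1 := abel_bound (fun j => a j - cK K) (2 * C + 1) (by positivity) hB ⌊Y / n⌋₊
  have h2 := harmonic_log (Y / n) hT
  have h3 : ∑ m ∈ Finset.Icc 1 ⌊Y / n⌋₊, (a m - cK K) / m =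
      n * LK I Y - cK K * ∑ m ∈ Finset.Icc 1 ⌊Y / n⌋₊, (1 : ℝ) / m := by
    rw [hL, Finset.mul_sum, ← Finset.sum_sub_distrib]
    refine Finset.sum_congr rfl fun j hj => ?_
    ring
  rw [h3] at h1
  have h4 : n * LK I Y - cK K * Real.log (Y / n) =
    (n * LK I Y - cK K * ∑ m ∈ Finset.Icc 1 ⌊Y / n⌋₊, (1 : ℝ) / m) +
      cK K * (∑ m ∈ Finset.Icc 1 ⌊Y / n⌋₊, (1 : ℝ) / m - Real.log (Y / n)) := by ring
  rw [h4]
  refine (abs_add_le _ _).trans (add_le_add h1 ?_)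
  rw [abs_mul, abs_of_pos hc]
  nlinarith

end P3

section P4
open scoped Classical
open NumberField IsDedekindDomain

variable {K : Type*} [Field K] [NumberField K]

lemma card_ideal_bigO : (fun n : ℕ => ∑ k ∈ Finset.Icc 1 n,
    (Nat.card {I : Ideal (𝓞 K) // Ideal.absNorm I = k} : ℝ)) =O[Filter.atTop]
      fun n : ℕ => (n : ℝ) ^ (1 : ℝ) := by
  have h := (NumberField.Ideal.tendsto_norm_le_div_atTop₀ K).comp tendsto_natCast_atTop_atTop
  have h2 := h.isBigO_one ℝ
  have h3 := h2.mul (Asymptotics.isBigO_refl (fun n : ℕ => (n : ℝ)) Filter.atTop)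
  refine Asymptotics.IsBigO.congr' h3 ?_ ?_
  · filter_upwards [Filter.eventually_ge_atTop 1] with n hn
    have hn0 : (n : ℝ) ≠ 0 := by positivity
    simp only [Function.comp_apply]
    rw [div_mul_cancel₀ _ hn0]
    simp only [Nat.cast_le, ← Nat.cast_sum]
    congr
    rw [← add_left_inj 1, ← Ideal.card_norm_le_eq_card_norm_le_add_one,
      show Finset.Icc 1 n = Finset.Ioc 0 n from Finset.Icc_succ_left_eq_Ioc _ _,
      show 1 = Nat.card {I : Ideal (𝓞 K) // Ideal.absNorm I = 0} by
        simp [Ideal.absNorm_eq_zero_iff],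
      Finset.sum_Ioc_add_eq_sum_Icc (n.zero_le),
      ← Finset.card_preimage_eq_sum_card_image_eq
        (fun k _ ↦ Ideal.finite_setOfPred_absNorm_eq k)]
    simp [Set.coe_eq_subtype]
  · filter_upwards with n
    simp

lemma summable_nat_card (f : ℕ → ℝ) (hf : ∀ n, 0 ≤ f n)
    (h : (fun n : ℕ => ∑ k ∈ Finset.Icc 1 n, f k) =O[Filter.atTop] fun n : ℕ => (n : ℝ) ^ (1 : ℝ)) :
    Summable (fun n : ℕ => f n * (n : ℝ) ^ (-(3 / 2) : ℝ)) := by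
  have h := LSeriesSummable_of_sum_norm_bigO_and_nonneg (s := ((3 / 2 : ℝ) : ℂ))
    h hf zero_le_one (by rw [Complex.ofReal_re]; norm_num)
  refine Summable.congr h.norm fun n => ?_
  rw [LSeries.norm_term_eq]
  split_ifs with hn
  · subst hn
    rw [Nat.cast_zero, Real.zero_rpow (by norm_num), mul_zero]
  · rw [Complex.ofReal_re, Real.rpow_neg (by positivity), div_eq_mul_inv, Complex.norm_real,
      Real.norm_of_nonneg (hf n)]

lemma summable_fiber {ι : Type*} (N : ι → ℕ) (a w : ℕ → ℝ) (hw : ∀ n, 0 ≤ w n)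
    (ha : ∀ n, 0 ≤ a n)
    (hs : Summable fun n => a n * w n)
    (hc : ∀ (u : Finset ι) (n : ℕ), ((u.filter fun i => N i = n).card : ℝ) ≤ a n) :
    Summable (fun i => w (N i)) := by
  refine summable_of_sum_le (c := ∑' n : ℕ, a n * w n) (fun i => hw _) fun u => ?_
  rw [← Finset.sum_fiberwise_of_maps_to (s := u) (t := u.image N)
    (g := N) (fun I hI => Finset.mem_image_of_mem _ hI)]
  refine le_trans (Finset.sum_le_sum fun n hn => ?_)
    (hs.sum_le_tsum (u.image N) fun n _ => mul_nonneg (ha n) (hw n))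
  have e1 : ∀ I ∈ u.filter (fun I => N I = n), w (N I) = w n := by
    intro I hI
    rw [(Finset.mem_filter.1 hI).2]
  rw [Finset.sum_congr rfl e1, Finset.sum_const, nsmul_eq_mul]
  exact mul_le_mul_of_nonneg_right (hc u n) (hw n)

lemma summable_ideal :
    Summable (fun I : {I : Ideal (𝓞 K) // I ≠ ⊥} =>
      (Ideal.absNorm (I : Ideal (𝓞 K)) : ℝ) ^ (-(3 / 2) : ℝ)) := by
  have h2 := summable_nat_card
    (fun n => (Nat.card {I : Ideal (𝓞 K) // Ideal.absNorm I = n} : ℝ)) (fun n => Nat.cast_nonneg _)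
    (card_ideal_bigO (K := K))
  refine summable_fiber (fun I : {I : Ideal (𝓞 K) // I ≠ ⊥} => Ideal.absNorm (I : Ideal (𝓞 K)))
    (fun n => (Nat.card {I : Ideal (𝓞 K) // Ideal.absNorm I = n} : ℝ))
    (fun n => (n : ℝ) ^ (-(3 / 2) : ℝ)) (fun n => Real.rpow_nonneg (Nat.cast_nonneg _) _)
    (fun n => Nat.cast_nonneg _) h2 ?_
  intro u n
  rw [Nat.cast_le]
  have : Finite {I : Ideal (𝓞 K) // Ideal.absNorm I = n} :=
    (Ideal.finite_setOfPred_absNorm_eq n)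
  rw [← Nat.card_eq_finsetCard]
  refine Nat.card_le_card_of_injective (fun I => ⟨I.1.1, (Finset.mem_filter.1 I.2).2⟩) ?_
  intro I J hIJ
  have h3 : I.1.1 = J.1.1 := (Subtype.mk.injEq _ _ _ _).mp hIJ
  exact Subtype.ext (Subtype.ext h3)

lemma summable_ideal_two :
    Summable (fun I : {I : Ideal (𝓞 K) // I ≠ ⊥} =>
      ((Ideal.absNorm (I : Ideal (𝓞 K)) : ℝ) ^ 2)⁻¹) := by
  refine Summable.of_nonneg_of_le (fun I => by positivity) (fun I => ?_) (summable_ideal (K := K))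
  have h1 := absNorm_pos I.2
  have h2 : (1 : ℝ) ≤ Ideal.absNorm I.1 := by exact_mod_cast h1
  rw [← Real.rpow_natCast, ← Real.rpow_neg h1.le]
  exact Real.rpow_le_rpow_of_exponent_le h2 (by norm_num)

/-- squarefree ideal attached to a finite set of primes -/
noncomputable def aK (s : Finset (HeightOneSpectrum (𝓞 K))) : Ideal (𝓞 K) :=
  ∏ v ∈ s, v.asIdeal

lemma aK_ne_bot (s : Finset (HeightOneSpectrum (𝓞 K))) : aK s ≠ ⊥ := by
  rw [aK, ← Ideal.zero_eq_bot, Finset.prod_ne_zero_iff]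
  intro v _
  exact v.ne_bot

lemma dvd_aK_iff (s : Finset (HeightOneSpectrum (𝓞 K))) (v : HeightOneSpectrum (𝓞 K)) :
    v.asIdeal ∣ aK s ↔ v ∈ s := by
  constructor
  · intro h
    obtain ⟨w, hw, hvw⟩ := (Prime.dvd_finsetProd_iff v.prime _).1 h
    have : v.asIdeal = w.asIdeal :=
      associated_iff_eq.1 (v.prime.associated_of_dvd w.prime hvw)
    rwa [HeightOneSpectrum.ext this]
  · intro h
    exact Finset.dvd_prod_of_mem _ h

lemma aK_injective : Function.Injective (aK (K := K)) := by
  intro s t hst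
  ext v
  rw [← dvd_aK_iff, hst, dvd_aK_iff]

lemma aK_dvd_iff (s : Finset (HeightOneSpectrum (𝓞 K))) (I : Ideal (𝓞 K)) :
    aK s ∣ I ↔ ∀ v ∈ s, v.asIdeal ∣ I := by
  constructor
  · intro h v hv
    exact ((dvd_aK_iff s v).2 hv).trans h
  · intro h
    have : aK s = ∏ p ∈ s.image (fun v => v.asIdeal), p := by
      rw [aK, Finset.prod_image]
      intro v _ w _ hvw
      exact HeightOneSpectrum.ext hvw
    rw [this]
    apply Finset.prod_primes_dvd
    · intro p hp
      obtain ⟨v, _, rfl⟩ := Finset.mem_image.1 hp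
      exact v.prime
    · intro p hp
      obtain ⟨v, hv, rfl⟩ := Finset.mem_image.1 hp
      exact h v hv

lemma mobius (I : Ideal (𝓞 K)) (hI : I ≠ ⊥) :
    ∃ W : Finset (Finset (HeightOneSpectrum (𝓞 K))), (∀ s, s ∈ W ↔ aK s ∣ I) ∧
      ∑ s ∈ W, (-1 : ℝ) ^ s.card = if I = ⊤ then 1 else 0 := by
  have hfin : {v : HeightOneSpectrum (𝓞 K) | v.asIdeal ∣ I}.Finite := Ideal.finite_factors hI
  refine ⟨hfin.toFinset.powerset, fun s => ?_, ?_⟩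
  · rw [aK_dvd_iff, Finset.mem_powerset]
    constructor
    · intro h v hv
      simpa using h hv
    · intro h v hv
      simpa using h v hv
  · have h := Finset.sum_powerset_neg_one_pow_card (x := hfin.toFinset)
    have h' : ∑ s ∈ hfin.toFinset.powerset, (-1 : ℝ) ^ s.card =
      if hfin.toFinset = ∅ then 1 else 0 := by exact_mod_cast congrArg (fun z : ℤ => (z : ℝ)) h
    rw [h']
    have : hfin.toFinset = ∅ ↔ I = ⊤ := by
      constructor
      · intro he
        by_contra hne
        obtain ⟨M, hM, hIM⟩ := Ideal.exists_le_maximal I hne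
        have hM0 : M ≠ ⊥ := by
          rintro rfl
          exact hI (le_bot_iff.1 hIM)
        have : (⟨M, hM.isPrime, hM0⟩ : HeightOneSpectrum (𝓞 K)) ∈ hfin.toFinset := by
          simpa using Ideal.dvd_iff_le.2 hIM
        rw [he] at this
        simp at this
      · rintro rfl
        ext v
        simp only [Set.Finite.mem_toFinset, Set.mem_ofPred_eq, Finset.notMem_empty, iff_false]
        intro hv
        exact v.isPrime.ne_top (top_le_iff.1 (Ideal.dvd_iff_le.1 hv))
    simp only [this]

end P4

section P5
open scoped Classical
open NumberField IsDedekindDomain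

variable {K : Type*} [Field K] [NumberField K]

lemma summable_aK_two : Summable (fun s : Finset (HeightOneSpectrum (𝓞 K)) =>
    (-1 : ℝ) ^ s.card * ((Ideal.absNorm (aK s) : ℝ) ^ 2)⁻¹) := by
  have h := (summable_ideal_two (K := K)).comp_injective
    (i := fun s : Finset (HeightOneSpectrum (𝓞 K)) => (⟨aK s, aK_ne_bot s⟩ : {I : Ideal (𝓞 K) // I ≠ ⊥}))
    (fun s t hst => aK_injective (congrArg Subtype.val hst))
  refine Summable.of_norm_bounded h fun s => ?_
  rw [norm_mul, norm_pow, norm_neg, norm_one, one_pow, one_mul, Real.norm_of_nonneg (by positivity)]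
  rfl

set_option maxHeartbeats 2000000 in
lemma zeta_rel : (∑' s : Finset (HeightOneSpectrum (𝓞 K)),
    (-1 : ℝ) ^ s.card * ((Ideal.absNorm (aK s) : ℝ) ^ 2)⁻¹) * zetaKTwo K = 1 := by
  set F : Finset (HeightOneSpectrum (𝓞 K)) × {I : Ideal (𝓞 K) // I ≠ ⊥} → ℝ := fun p =>
    if aK p.1 ∣ p.2.1 then (-1 : ℝ) ^ p.1.card * ((Ideal.absNorm p.2.1 : ℝ) ^ 2)⁻¹ else 0 with hF
  set g : Finset (HeightOneSpectrum (𝓞 K)) × {I : Ideal (𝓞 K) // I ≠ ⊥} →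
    Finset (HeightOneSpectrum (𝓞 K)) × {I : Ideal (𝓞 K) // I ≠ ⊥} := fun p =>
    (p.1, ⟨aK p.1 * p.2.1, mul_ne_zero (aK_ne_bot p.1) p.2.2⟩) with hg
  have hginj : Function.Injective g := by
    rintro ⟨s, I, hI⟩ ⟨t, J, hJ⟩ h
    simp only [hg, Prod.mk.injEq, Subtype.mk.injEq] at h
    obtain ⟨rfl, h2⟩ := h
    have := mul_left_cancel₀ (show aK s ≠ 0 from aK_ne_bot s) h2
    subst this
    rfl
  have hsupp : Function.support F ⊆ Set.range g := by
    rintro ⟨s, I, hI⟩ h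
    have hd : aK s ∣ I := by
      by_contra hd
      exact h (by simp only [hF]; rw [if_neg hd])
    obtain ⟨J, rfl⟩ := hd
    exact ⟨(s, ⟨J, fun h0 => hI (by rw [h0, Ideal.mul_bot])⟩), rfl⟩
  have hFg : F ∘ g = fun p => ((-1 : ℝ) ^ p.1.card * ((Ideal.absNorm (aK p.1) : ℝ) ^ 2)⁻¹) *
      ((Ideal.absNorm p.2.1 : ℝ) ^ 2)⁻¹ := by
    ext ⟨s, I, hI⟩
    simp only [hF, hg, Function.comp_apply]
    rw [if_pos (dvd_mul_right _ _), map_mul]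
    push_cast
    rw [mul_pow, mul_inv]
    ring
  have hprod := (summable_aK_two (K := K)).norm.of_norm
  have hsum2 : Summable (fun p : Finset (HeightOneSpectrum (𝓞 K)) × {I : Ideal (𝓞 K) // I ≠ ⊥} =>
      ((-1 : ℝ) ^ p.1.card * ((Ideal.absNorm (aK p.1) : ℝ) ^ 2)⁻¹) *
      ((Ideal.absNorm p.2.1 : ℝ) ^ 2)⁻¹) :=
    summable_mul_of_summable_norm (summable_aK_two (K := K)).norm (summable_ideal_two (K := K)).norm
  have hFs : Summable F := by
    rw [← hginj.summable_iff, hFg]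
    · exact hsum2
    · intro x hx
      by_contra h
      exact hx (hsupp h)
  rw [zetaKTwo, (summable_aK_two (K := K)).tsum_mul_tsum (summable_ideal_two (K := K)) hsum2, ← hFg]
  have : (∑' z, (F ∘ g) z) = ∑' z, F z := hginj.tsum_eq hsupp
  rw [this, ← (Equiv.prodComm _ _).tsum_eq F, 
    Summable.tsum_prod (f := fun c => F ((Equiv.prodComm _ _) c))
      ((Equiv.prodComm _ _).summable_iff.2 hFs)]
  have hin : ∀ I : {I : Ideal (𝓞 K) // I ≠ ⊥}, ∑' s, F (s, I) =
      if I = ⟨⊤, top_ne_bot⟩ then 1 else 0 := by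
    rintro ⟨I, hI⟩
    obtain ⟨W, hW, hs⟩ := mobius I hI
    rw [tsum_eq_sum (s := W)]
    · have : ∀ s ∈ W, F (s, ⟨I, hI⟩) = (-1 : ℝ) ^ s.card * ((Ideal.absNorm I : ℝ) ^ 2)⁻¹ := by
        intro s hs
        simp only [hF]
        rw [if_pos ((hW s).1 hs)]
      rw [Finset.sum_congr rfl this, ← Finset.sum_mul, hs]
      simp only [Subtype.mk.injEq]
      split_ifs with h
      · subst h
        simp
      · simp
    · intro s hs
      simp only [hF]
      rw [if_neg (fun h => hs ((hW s).2 h))]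
  refine Eq.trans (tsum_congr hin) ?_
  rw [tsum_ite_eq]

noncomputable def SK (K : Type*) [Field K] [NumberField K] (Y : ℝ) : ℝ :=
  ∑ e ∈ BK K Y, ∑ f ∈ BK K Y, if IsCoprime e f then (nmK (e : K))⁻¹ * (nmK (f : K))⁻¹ else 0

lemma SK_hasSum (hdeg : Module.finrank ℚ K = 2) (himag : IsEmpty (K →+* ℝ)) (Y : ℝ) :
    HasSum (fun s : Finset (HeightOneSpectrum (𝓞 K)) => (-1 : ℝ) ^ s.card * LK (aK s) Y ^ 2)
      (SK K Y) := by
  have key : ∀ e ∈ BK K Y, ∀ f ∈ BK K Y,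
      HasSum (fun s : Finset (HeightOneSpectrum (𝓞 K)) => (-1 : ℝ) ^ s.card *
        ((if e ∈ aK s then (nmK (e : K))⁻¹ else 0) * (if f ∈ aK s then (nmK (f : K))⁻¹ else 0)))
      (if IsCoprime e f then (nmK (e : K))⁻¹ * (nmK (f : K))⁻¹ else 0) := by
    intro e he f hf
    rw [mem_BK hdeg himag] at he
    obtain ⟨W, hW, hs⟩ := mobius (Ideal.span {e} ⊔ Ideal.span {f}) (by
      intro h
      rw [sup_eq_bot_iff, Ideal.span_singleton_eq_bot] at h
      exact he.1 h.1)
    have hW' : ∀ s, s ∈ W ↔ e ∈ aK s ∧ f ∈ aK s := by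
      intro s
      rw [hW, Ideal.dvd_iff_le, sup_le_iff, Ideal.span_singleton_le_iff_mem,
        Ideal.span_singleton_le_iff_mem]
    have : (if IsCoprime e f then (nmK (e : K))⁻¹ * (nmK (f : K))⁻¹ else 0) =
        ∑ s ∈ W, (-1 : ℝ) ^ s.card *
        ((if e ∈ aK s then (nmK (e : K))⁻¹ else 0) * (if f ∈ aK s then (nmK (f : K))⁻¹ else 0)) := by
      rw [Finset.sum_congr rfl (g := fun s => (-1 : ℝ) ^ s.card * ((nmK (e : K))⁻¹ * (nmK (f : K))⁻¹)),
        ← Finset.sum_mul, hs]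
      · have : Ideal.span {e} ⊔ Ideal.span {f} = ⊤ ↔ IsCoprime e f := by
          rw [← Ideal.isCoprime_span_singleton_iff, Ideal.isCoprime_iff_sup_eq]
        simp only [this]
        split_ifs <;> simp
      · intro s hs
        have := (hW' s).1 hs
        rw [if_pos this.1, if_pos this.2]
    rw [this]
    apply hasSum_sum_of_ne_finset_zero
    intro s hs
    rw [hW'] at hs
    by_cases h1 : e ∈ aK s
    · have h2 : f ∉ aK s := fun h => hs ⟨h1, h⟩
      rw [if_neg h2, mul_zero, mul_zero]
    · rw [if_neg h1, zero_mul, mul_zero]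
  have h := hasSum_sum fun e he => hasSum_sum fun f hf => key e he f hf
  rw [SK]
  convert h using 1
  ext s
  rw [LK, Finset.sum_filter, sq, Finset.sum_mul_sum, Finset.mul_sum]
  refine Finset.sum_congr rfl fun e _ => ?_
  rw [Finset.mul_sum]

lemma one_add_log_sq_le (n : ℝ) (hn : 1 ≤ n) : (1 + Real.log n) ^ 2 ≤ 16 * √n := by
  set t := √(√n) with ht
  have h1 : t ^ 2 = √n := Real.sq_sqrt (Real.sqrt_nonneg _)
  have h2 : √n ^ 2 = n := Real.sq_sqrt (by linarith)
  have h3 : 0 < t := Real.sqrt_pos.2 (Real.sqrt_pos.2 (by linarith))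
  have h4 : n = t ^ 4 := by rw [← h2, ← h1]; ring
  have h5 : Real.log n = 4 * Real.log t := by rw [h4, Real.log_pow]; norm_num
  have h6 := Real.log_le_sub_one_of_pos h3
  have h7 := Real.log_nonneg hn
  rw [← h1]
  have : 1 + Real.log n ≤ 4 * t := by linarith
  nlinarith

lemma term_bound (c C n l L : ℝ) (hc : 0 < c) (hC : 0 ≤ C) (hn : 1 ≤ n) (hl : 0 ≤ l)
    (h : (l < Real.log n ∧ L = 0) ∨ |n * L - c * (l - Real.log n)| ≤ C) :
    |L ^ 2 - c ^ 2 * l ^ 2 * (n ^ 2)⁻¹| ≤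
      16 * ((C + c) ^ 2 + 2 * c * (C + c)) * (1 + l) * n ^ (-(3 / 2) : ℝ) := by
  have hlog := Real.log_nonneg hn
  set m := Real.log n with hm
  have hn0 : 0 < n := by linarith
  have e1 : n ^ (-(3 / 2) : ℝ) = √n * (n ^ 2)⁻¹ := by
    rw [Real.sqrt_eq_rpow, ← Real.rpow_natCast, ← Real.rpow_neg hn0.le, ← Real.rpow_add hn0]
    norm_num
  have e2 : L ^ 2 - c ^ 2 * l ^ 2 * (n ^ 2)⁻¹ = ((n * L) ^ 2 - c ^ 2 * l ^ 2) * (n ^ 2)⁻¹ := by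
    field_simp
  have hsq := one_add_log_sq_le n hn
  rw [← hm] at hsq
  rw [e1, e2, abs_mul, abs_of_nonneg (show 0 ≤ (n ^ 2)⁻¹ by positivity), ← mul_assoc]
  refine mul_le_mul_of_nonneg_right ?_ (by positivity)
  set A := C + c with hA
  have hA0 : 0 < A := by positivity
  suffices hs : |(n * L) ^ 2 - c ^ 2 * l ^ 2| ≤ (A ^ 2 + 2 * c * A) * (1 + l) * (1 + m) ^ 2 by
    refine hs.trans ?_
    have : 0 ≤ (A ^ 2 + 2 * c * A) * (1 + l) := by positivity
    nlinarith [mul_le_mul_of_nonneg_left hsq this]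
  rcases h with ⟨h1, rfl⟩ | h
  · rw [mul_zero, zero_pow two_ne_zero, zero_sub, abs_neg, abs_of_nonneg (by positivity)]
    have a1 : l ^ 2 ≤ (1 + l) * (1 + m) ^ 2 := by nlinarith [mul_nonneg hl hlog]
    have a2 : c ^ 2 ≤ A ^ 2 + 2 * c * A := by
      have : c ≤ A := by linarith
      nlinarith
    rw [mul_assoc]
    exact mul_le_mul a2 a1 (by positivity) (by positivity)
  · set u := n * L
    have hE : |u - c * l| ≤ A * (1 + m) := by
      have : u - c * l = (u - c * (l - m)) - c * m := by ring
      rw [this]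
      refine (abs_sub _ _).trans ?_
      rw [abs_of_nonneg (show 0 ≤ c * m by positivity)]
      nlinarith [mul_nonneg hC hlog]
    have : u ^ 2 - c ^ 2 * l ^ 2 = (u - c * l) * ((u - c * l) + 2 * (c * l)) := by ring
    rw [this, abs_mul]
    have h2 : |u - c * l + 2 * (c * l)| ≤ A * (1 + m) + 2 * c * l := by
      refine (abs_add_le _ _).trans ?_
      rw [abs_of_nonneg (show 0 ≤ 2 * (c * l) by positivity)]
      linarith
    refine (mul_le_mul hE h2 (abs_nonneg _) (by positivity)).trans ?_
    have b1 : (1 + m) ≤ (1 + m) ^ 2 := by nlinarith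
    have b2 : 0 ≤ A ^ 2 * (1 + m) ^ 2 * l := by positivity
    have b3 : 0 ≤ 2 * c * A * (1 + m) ^ 2 := by positivity
    have b4 : 2 * c * A * l * (1 + m) ≤ 2 * c * A * l * (1 + m) ^ 2 :=
      mul_le_mul_of_nonneg_left b1 (by positivity)
    nlinarith

lemma SK_asymp (hdeg : Module.finrank ℚ K = 2) (himag : IsEmpty (K →+* ℝ)) :
    ∃ C : ℝ, 0 ≤ C ∧ ∀ Y : ℝ, 1 ≤ Y →
      |SK K Y - cK K ^ 2 * Real.log Y ^ 2 * (zetaKTwo K)⁻¹| ≤ C * (1 + Real.log Y) := by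
  obtain ⟨C, hC, hb⟩ := LK_bound (K := K) hdeg himag
  have hc := cK_pos (K := K)
  have hsum := (summable_ideal (K := K)).comp_injective
    (i := fun s : Finset (HeightOneSpectrum (𝓞 K)) => (⟨aK s, aK_ne_bot s⟩ : {I : Ideal (𝓞 K) // I ≠ ⊥}))
    (fun s t hst => aK_injective (congrArg Subtype.val hst))
  set T := ∑' s : Finset (HeightOneSpectrum (𝓞 K)), (Ideal.absNorm (aK s) : ℝ) ^ (-(3 / 2) : ℝ) with hT
  have hT0 : 0 ≤ T := tsum_nonneg fun s => by positivity
  refine ⟨16 * ((C + cK K) ^ 2 + 2 * cK K * (C + cK K)) * T, by positivity, fun Y hY => ?_⟩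
  have hl := Real.log_nonneg hY
  have hz : ∑' s : Finset (HeightOneSpectrum (𝓞 K)),
    (-1 : ℝ) ^ s.card * ((Ideal.absNorm (aK s) : ℝ) ^ 2)⁻¹ = (zetaKTwo K)⁻¹ :=
    eq_inv_of_mul_eq_one_left zeta_rel
  have h1 := SK_hasSum hdeg himag Y
  have h2 := ((summable_aK_two (K := K)).hasSum.mul_left (cK K ^ 2 * Real.log Y ^ 2))
  rw [hz] at h2
  have h3 := h1.sub h2
  have h4 : HasSum (fun s : Finset (HeightOneSpectrum (𝓞 K)) =>
      16 * ((C + cK K) ^ 2 + 2 * cK K * (C + cK K)) * (1 + Real.log Y) *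
      (Ideal.absNorm (aK s) : ℝ) ^ (-(3 / 2) : ℝ)) (16 * ((C + cK K) ^ 2 + 2 * cK K * (C + cK K)) * (1 + Real.log Y) * T) :=
    (hsum.hasSum).mul_left _
  have h5 := h3.norm_le_of_bounded h4 (fun s => ?_)
  · rw [Real.norm_eq_abs] at h5
    refine h5.trans (le_of_eq (by ring))
  · have hN := absNorm_pos (aK_ne_bot s)
    have hN1 : (1 : ℝ) ≤ Ideal.absNorm (aK s) := by exact_mod_cast hN
    have := term_bound (cK K) C (Ideal.absNorm (aK s)) (Real.log Y) (LK (aK s) Y) hc hC hN1 hl (by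
      rcases lt_or_ge Y (Ideal.absNorm (aK s) : ℝ) with h | h
      · left
        exact ⟨Real.log_lt_log (by linarith) h, LK_eq_zero hdeg himag _ _ h⟩
      · right
        rw [← Real.log_div (by linarith) (by linarith)]
        exact hb _ (aK_ne_bot s) Y h)
    refine le_trans (le_of_eq ?_) this
    rw [show (-1 : ℝ) ^ s.card * LK (aK s) Y ^ 2 - cK K ^ 2 * Real.log Y ^ 2 *
      ((-1 : ℝ) ^ s.card * ((Ideal.absNorm (aK s) : ℝ) ^ 2)⁻¹) = (-1 : ℝ) ^ s.card *
      (LK (aK s) Y ^ 2 - cK K ^ 2 * Real.log Y ^ 2 * ((Ideal.absNorm (aK s) : ℝ) ^ 2)⁻¹) by ring,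
      norm_mul, norm_pow, norm_neg, norm_one, one_pow, one_mul, Real.norm_eq_abs]

end P5

section P6
open scoped Classical
open NumberField

variable {K : Type*} [Field K] [NumberField K]

lemma card_BK (hdeg : Module.finrank ℚ K = 2) (himag : IsEmpty (K →+* ℝ)) :
    ∃ C : ℝ, 0 ≤ C ∧ ∀ Y : ℝ, 1 ≤ Y → ((BK K Y).card : ℝ) ≤ C * Y := by
  obtain ⟨C, hC, h⟩ := count_unif (K := K) hdeg himag
  have hc := cK_pos (K := K)
  refine ⟨cK K + 2 * C, by positivity, fun Y hY => ?_⟩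
  obtain ⟨hfin, hb⟩ := h ⊤ top_ne_bot 0 Y (by linarith)
  have h1 : ((BK K Y).card : ℝ) ≤ ({x : 𝓞 K | x - 0 ∈ (⊤ : Ideal (𝓞 K)) ∧ nmK (x : K) ≤ Y}.ncard : ℝ) := by
    rw [Nat.cast_le, ← Set.ncard_coe_finset]
    refine Set.ncard_le_ncard ?_ hfin
    intro x hx
    rw [Finset.mem_coe, mem_BK hdeg himag] at hx
    exact ⟨Submodule.mem_top, hx.2⟩
  rw [Ideal.absNorm_top, Nat.cast_one, div_one, div_one] at hb
  have h2 := (abs_le.1 hb).2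
  have h3 : √Y ≤ Y := by
    rw [Real.sqrt_le_left (by linarith)]; nlinarith
  nlinarith

lemma sum_inv_BK (hdeg : Module.finrank ℚ K = 2) (himag : IsEmpty (K →+* ℝ)) :
    ∃ C : ℝ, 0 ≤ C ∧ ∀ Y : ℝ, 1 ≤ Y → ∑ e ∈ BK K Y, (nmK (e : K))⁻¹ ≤ C * (1 + Real.log Y) := by
  obtain ⟨C, hC, h⟩ := LK_bound (K := K) hdeg himag
  have hc := cK_pos (K := K)
  refine ⟨C + cK K, by positivity, fun Y hY => ?_⟩
  have hb := h ⊤ top_ne_bot Y (by simpa using hY)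
  have hl := Real.log_nonneg hY
  rw [Ideal.absNorm_top, Nat.cast_one, div_one, one_mul, LK, Finset.filter_true_of_mem
    (fun _ _ => Submodule.mem_top)] at hb
  have h2 := (abs_le.1 hb).2
  nlinarith [mul_nonneg hC hl]

noncomputable def dp (Y : ℝ) (x : 𝓞 K) : ℕ := ((BK K Y).filter (fun e => e ∣ x)).card

noncomputable def rK (Y : ℝ) (x : 𝓞 K) : ℕ :=
  ((BK K Y).filter (fun e => e ∣ x ∧ nmK (x : K) ≤ Y * nmK (e : K))).card

lemma rK_le_dp (Y : ℝ) (x : 𝓞 K) : rK Y x ≤ dp Y x := by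
  refine Finset.card_le_card fun e he => ?_
  rw [Finset.mem_filter] at he ⊢
  exact ⟨he.1, he.2.1⟩

lemma dK_split (hdeg : Module.finrank ℚ K = 2) (himag : IsEmpty (K →+* ℝ)) (Y : ℝ) (hY : 0 < Y)
    (x : 𝓞 K) (hx : x ≠ 0) (hxY : nmK (x : K) ≤ Y ^ 2) :
    dK K x + rK Y x = 2 * dp Y x := by
  set D : Finset (𝓞 K) := (BK K (nmK (x : K))).filter (fun e => e ∣ x) with hD
  have hmul : ∀ a b : 𝓞 K, a * b = x → nmK (a : K) * nmK (b : K) = nmK (x : K) := by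
    intro a b h
    rw [← nmK_mul, ← h]
    push_cast
    rfl
  have hne : ∀ e, e ∣ x → e ≠ 0 := fun e he h0 => hx (by rwa [h0, zero_dvd_iff] at he)
  have memD : ∀ e, e ∈ D ↔ e ∣ x := by
    intro e
    rw [hD, Finset.mem_filter, mem_BK hdeg himag]
    refine ⟨fun h => h.2, fun h => ⟨⟨hne e h, ?_⟩, h⟩⟩
    obtain ⟨g, hg⟩ := h
    have h1 := hmul e g hg.symm
    have h2 := one_le_nmK (x := g) (fun h0 => hx (by rw [hg, h0, mul_zero]))
    have h3 := nmK_nonneg (e : K)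
    nlinarith
  have hdK : dK K x = D.card := by
    rw [dK, ← Set.ncard_coe_finset]
    congr 1
    ext e
    rw [Finset.mem_coe, memD]
    exact ⟨fun h => h.2, fun h => ⟨hne e h, h⟩⟩
  set P := D.filter (fun e : 𝓞 K => nmK (e : K) ≤ Y) with hP
  set Q := D.filter (fun e : 𝓞 K => nmK (x : K) ≤ Y * nmK (e : K)) with hQ
  have hPc : P.card = dp Y x := by
    rw [dp]
    congr 1
    ext e
    rw [hP, Finset.mem_filter (s := D), memD, Finset.mem_filter, mem_BK hdeg himag]
    exact ⟨fun h => ⟨⟨hne e h.1, h.2⟩, h.1⟩, fun h => ⟨h.2, h.1.2⟩⟩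
  have hIc : (P ∩ Q).card = rK Y x := by
    rw [rK]
    congr 1
    ext e
    rw [hP, hQ, Finset.mem_inter, Finset.mem_filter (s := D), Finset.mem_filter (s := D), memD,
      Finset.mem_filter, mem_BK hdeg himag]
    exact ⟨fun h => ⟨⟨hne e h.1.1, h.1.2⟩, h.1.1, h.2.2⟩, fun h => ⟨⟨h.2.1, h.1.2⟩, h.2.1, h.2.2⟩⟩
  have hU : P ∪ Q = D := by
    rw [hP, hQ, ← Finset.filter_or, Finset.filter_true_of_mem]
    intro e he
    by_contra h
    push Not at h
    nlinarith
  have hPQ : P.card = Q.card := by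
    set q : 𝓞 K → 𝓞 K := fun e => if h : e ∣ x then h.choose else 0 with hq
    have hqe : ∀ e, e ∣ x → e * q e = x := by
      intro e h
      simp only [hq]
      rw [dif_pos h]
      exact h.choose_spec.symm
    have hqd : ∀ e, e ∣ x → q e ∣ x := fun e h => ⟨e, by rw [mul_comm, hqe e h]⟩
    have hqq : ∀ e, e ∣ x → q (q e) = e := by
      intro e h
      have h1 := hqe _ (hqd e h)
      have h2 := hqe e h
      have h3 := hne _ (hqd e h)
      apply mul_left_cancel₀ h3
      rw [h1, mul_comm, h2]
    refine Finset.card_nbij' q q ?_ ?_ ?_ ?_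
    · intro e he
      rw [Finset.mem_coe, hP, Finset.mem_filter, memD] at he
      rw [Finset.mem_coe, hQ, Finset.mem_filter, memD]
      refine ⟨hqd e he.1, ?_⟩
      rw [← hmul _ _ (hqe e he.1)]
      exact mul_le_mul_of_nonneg_right he.2 (nmK_nonneg _)
    · intro e he
      rw [Finset.mem_coe, hQ, Finset.mem_filter, memD] at he
      rw [Finset.mem_coe, hP, Finset.mem_filter, memD]
      refine ⟨hqd e he.1, ?_⟩
      have h1 := he.2
      rw [← hmul _ _ (hqe e he.1), mul_comm] at h1
      have h0 : (e : K) ≠ 0 := by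
        have := hne e he.1
        exact_mod_cast this
      exact le_of_mul_le_mul_right h1 (nmK_pos h0)
    · intro e he
      rw [Finset.mem_coe, hP, Finset.mem_filter, memD] at he
      exact hqq e he.1
    · intro e he
      rw [Finset.mem_coe, hQ, Finset.mem_filter, memD] at he
      exact hqq e he.1
  have := Finset.card_union_add_card_inter P Q
  rw [hU, hIc, ← hPQ, hPc] at this
  rw [hdK]
  omega

lemma split_ineq (d1 d2 r1 r2 a b : ℝ) (h1 : d1 + r1 = 2 * a) (h2 : d2 + r2 = 2 * b)
    (hr1 : 0 ≤ r1) (hr2 : 0 ≤ r2) (h3 : r1 ≤ a) (h4 : r2 ≤ b) :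
    |d1 * d2 - 4 * (a * b)| ≤ 2 * (r1 * b) + 2 * (r2 * a) := by
  have e1 : d1 = 2 * a - r1 := by linarith
  have e2 : d2 = 2 * b - r2 := by linarith
  rw [e1, e2, abs_le]
  constructor
  · nlinarith [mul_nonneg hr1 hr2]
  · nlinarith [mul_nonneg hr1 hr2, mul_nonneg hr1 (sub_nonneg.2 h4), mul_nonneg hr2 (sub_nonneg.2 h3),
      mul_nonneg hr1 (hr2.trans h4), mul_nonneg hr2 (hr1.trans h3)]

lemma err_count (hdeg : Module.finrank ℚ K = 2) (himag : IsEmpty (K →+* ℝ)) :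
    ∃ C : ℝ, 0 ≤ C ∧ ∀ Y : ℝ, 1 ≤ Y → ∀ u : 𝓞 K, IsUnit u → ∀ A : Finset (𝓞 K),
      ∀ e ∈ BK K Y, ∀ f ∈ BK K Y,
      ((A.filter (fun z => (e ∣ z ∧ nmK (z : K) ≤ Y * nmK (e : K)) ∧ f ∣ z + u)).card : ℝ) ≤
        C * Y * (nmK (f : K))⁻¹ := by
  obtain ⟨C, hC, h⟩ := count_unif (K := K) hdeg himag
  have hc := cK_pos (K := K)
  refine ⟨cK K + 2 * C, by positivity, fun Y hY u hu A e he f hf => ?_⟩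
  rw [mem_BK hdeg himag] at he hf
  have hf1 := one_le_nmK hf.1
  have he1 := one_le_nmK he.1
  have he0 : 0 < nmK (e : K) := by linarith
  set G := A.filter (fun z => (e ∣ z ∧ nmK (z : K) ≤ Y * nmK (e : K)) ∧ f ∣ z + u) with hG
  rcases G.eq_empty_or_nonempty with h0 | ⟨z0, hz0⟩
  · rw [h0, Finset.card_empty, Nat.cast_zero]
    have : 0 ≤ (nmK (f : K))⁻¹ := inv_nonneg.2 (by linarith)
    positivity
  · rw [hG, Finset.mem_filter] at hz0
    obtain ⟨_, ⟨⟨g0, rfl⟩, _⟩, hf0⟩ := hz0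
    have hI : Ideal.span {f} ≠ ⊥ := by
      rw [Ne, Ideal.span_singleton_eq_bot]; exact hf.1
    have hcop : IsCoprime e f := by
      obtain ⟨k, hk⟩ := hf0
      obtain ⟨v, rfl⟩ := hu
      refine ⟨-(g0 * (v⁻¹ : (𝓞 K)ˣ)), k * (v⁻¹ : (𝓞 K)ˣ), ?_⟩
      have : (v : 𝓞 K) = f * k - e * g0 := by rw [← hk]; ring
      calc -(g0 * (v⁻¹ : (𝓞 K)ˣ)) * e + k * (v⁻¹ : (𝓞 K)ˣ) * f
          = (f * k - e * g0) * (v⁻¹ : (𝓞 K)ˣ) := by ring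
        _ = 1 := by rw [← this]; simp
    obtain ⟨hfin, hb⟩ := h (Ideal.span {f}) hI g0 Y (by linarith)
    rw [← nmK_eq_absNorm] at hb
    have h1 : (G.card : ℝ) ≤ ({x : 𝓞 K | x - g0 ∈ Ideal.span {f} ∧ nmK (x : K) ≤ Y}.ncard : ℝ) := by
      rw [Nat.cast_le, ← Set.ncard_coe_finset]
      have hsub : (G : Set (𝓞 K)) ⊆ (fun g => e * g) ''
          {x : 𝓞 K | x - g0 ∈ Ideal.span {f} ∧ nmK (x : K) ≤ Y} := by
        intro z hz
        rw [Finset.mem_coe, hG, Finset.mem_filter] at hz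
        obtain ⟨_, ⟨⟨g, rfl⟩, hN⟩, hfz⟩ := hz
        refine ⟨g, ⟨?_, ?_⟩, rfl⟩
        · rw [Ideal.mem_span_singleton]
          have h2 : f ∣ e * (g - g0) := by
            have := dvd_sub hfz hf0
            rwa [show e * g + u - (e * g0 + u) = e * (g - g0) by ring] at this
          exact hcop.symm.dvd_of_dvd_mul_left h2
        · push_cast at hN
          rw [nmK_mul, mul_comm] at hN
          exact le_of_mul_le_mul_right hN he0
      exact (Set.ncard_le_ncard hsub (hfin.image _)).trans (Set.ncard_image_le hfin)
    have h2 := (abs_le.1 hb).2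
    have hge : 1 ≤ Y / nmK (f : K) := by
      rw [le_div_iff₀ (by linarith)]; linarith [hf.2]
    have h3 : √(Y / nmK (f : K)) ≤ Y / nmK (f : K) := by
      rw [Real.sqrt_le_left (by linarith)]; nlinarith
    rw [mul_div_assoc] at h2
    rw [mul_assoc, ← div_eq_mul_inv]
    nlinarith

lemma sum_count (A B : Finset (𝓞 K)) (p q : 𝓞 K → 𝓞 K → Prop)
    [∀ e x, Decidable (p e x)] [∀ e x, Decidable (q e x)] :
    ∑ x ∈ A, (((B.filter (fun e => p e x)).card : ℝ) * ((B.filter (fun e => q e x)).card : ℝ)) =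
      ∑ e ∈ B, ∑ f ∈ B, ((A.filter (fun x => p e x ∧ q f x)).card : ℝ) := by
  have h : ∀ x ∈ A, (((B.filter (fun e => p e x)).card : ℝ) * ((B.filter (fun e => q e x)).card : ℝ)) =
      ∑ e ∈ B, ∑ f ∈ B, if p e x ∧ q f x then (1 : ℝ) else 0 := by
    intro x _
    rw [Finset.natCast_card_filter, Finset.natCast_card_filter, Finset.sum_mul_sum]
    refine Finset.sum_congr rfl fun e _ => Finset.sum_congr rfl fun f _ => ?_
    by_cases h1 : p e x <;> by_cases h2 : q f x <;> simp [h1, h2]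
  rw [Finset.sum_congr rfl h, Finset.sum_comm]
  refine Finset.sum_congr rfl fun e _ => ?_
  rw [Finset.sum_comm]
  refine Finset.sum_congr rfl fun f _ => ?_
  rw [Finset.natCast_card_filter]

lemma err_sum (hdeg : Module.finrank ℚ K = 2) (himag : IsEmpty (K →+* ℝ)) :
    ∃ C : ℝ, 0 ≤ C ∧ ∀ Y : ℝ, 1 ≤ Y → ∀ u : 𝓞 K, IsUnit u → ∀ A : Finset (𝓞 K),
      ∑ z ∈ A, ((rK Y z : ℝ) * (dp Y (z + u) : ℝ)) ≤ C * (Y ^ 2 * (1 + Real.log Y)) := by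
  obtain ⟨C, hC, h⟩ := err_count (K := K) hdeg himag
  obtain ⟨C1, hC1, h1⟩ := card_BK (K := K) hdeg himag
  obtain ⟨C2, hC2, h2⟩ := sum_inv_BK (K := K) hdeg himag
  refine ⟨C * C1 * C2, by positivity, fun Y hY u hu A => ?_⟩
  have hl := Real.log_nonneg hY
  simp only [rK, dp]
  rw [sum_count A (BK K Y) (fun e z => e ∣ z ∧ nmK (z : K) ≤ Y * nmK (e : K)) (fun e z => e ∣ z + u)]
  calc _ ≤ ∑ e ∈ BK K Y, ∑ f ∈ BK K Y, C * Y * (nmK (f : K))⁻¹ :=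
        Finset.sum_le_sum fun e he => Finset.sum_le_sum fun f hf => h Y hY u hu A e he f hf
    _ = (BK K Y).card * (C * Y * ∑ f ∈ BK K Y, (nmK (f : K))⁻¹) := by
        rw [Finset.sum_const, nsmul_eq_mul, ← Finset.mul_sum]
    _ ≤ (C1 * Y) * (C * Y * (C2 * (1 + Real.log Y))) := by
        refine mul_le_mul (h1 Y hY) (mul_le_mul_of_nonneg_left (h2 Y hY) (by positivity)) ?_
          (by positivity)
        refine mul_nonneg (by positivity) (Finset.sum_nonneg fun e _ => inv_nonneg.2 (nmK_nonneg _))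
    _ = _ := by ring

noncomputable def AK (K : Type*) [Field K] [NumberField K] (X : ℝ) : Finset (𝓞 K) :=
  (BK K X).erase (-1)

lemma main_count (hdeg : Module.finrank ℚ K = 2) (himag : IsEmpty (K →+* ℝ)) :
    ∃ C : ℝ, 0 ≤ C ∧ ∀ X : ℝ, 1 ≤ X → ∀ e f : 𝓞 K, e ≠ 0 → f ≠ 0 →
      |(((AK K X).filter (fun x => e ∣ x ∧ f ∣ x + 1)).card : ℝ) -
        cK K * X * (if IsCoprime e f then (nmK (e : K))⁻¹ * (nmK (f : K))⁻¹ else 0)| ≤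
        C * (√X * ((nmK (e : K))⁻¹ + (nmK (f : K))⁻¹) + 1) := by
  obtain ⟨C, hC, h⟩ := count_unif (K := K) hdeg himag
  refine ⟨C + 2, by positivity, fun X hX e f he hf => ?_⟩
  have he1 := one_le_nmK he
  have hf1 := one_le_nmK hf
  set G := (AK K X).filter (fun x => e ∣ x ∧ f ∣ x + 1) with hG
  set a := (nmK (e : K))⁻¹ with ha
  set b := (nmK (f : K))⁻¹ with hb
  have ha0 : 0 < a := inv_pos.2 (by linarith)
  have hb0 : 0 < b := inv_pos.2 (by linarith)
  have hX0 := Real.sqrt_nonneg X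
  by_cases hcop : IsCoprime e f
  · rw [if_pos hcop]
    obtain ⟨p, q, hpq⟩ := id hcop
    set x0 := -(p * e) with hx0
    have hI : Ideal.span {e * f} ≠ ⊥ := by
      rw [Ne, Ideal.span_singleton_eq_bot]; exact mul_ne_zero he hf
    obtain ⟨hfin, hbd⟩ := h (Ideal.span {e * f}) hI x0 X (by linarith)
    set T := {x : 𝓞 K | x - x0 ∈ Ideal.span {e * f} ∧ nmK (x : K) ≤ X} with hT
    have hN : ((Ideal.absNorm (Ideal.span {e * f}) : ℕ) : ℝ) = nmK (e : K) * nmK (f : K) := by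
      rw [← nmK_eq_absNorm, ← nmK_mul]
      push_cast
      rfl
    rw [hN] at hbd
    have hmem : ∀ x, x - x0 ∈ Ideal.span {e * f} ↔ e ∣ x ∧ f ∣ x + 1 := by
      intro x
      have h1 : e ∣ x - x0 ↔ e ∣ x := by
        rw [show x - x0 = x + e * p by rw [hx0]; ring]
        exact dvd_add_left (dvd_mul_right _ _)
      have h2 : f ∣ x - x0 ↔ f ∣ x + 1 := by
        rw [show x - x0 = x + 1 + f * (-q) by rw [hx0, ← hpq]; ring]
        exact dvd_add_left (dvd_mul_right _ _)
      rw [Ideal.mem_span_singleton, ← h1, ← h2]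
      exact ⟨fun h => ⟨(dvd_mul_right _ _).trans h, (dvd_mul_left _ _).trans h⟩,
        fun h => hcop.mul_dvd h.1 h.2⟩
    have hsub1 : (G : Set (𝓞 K)) ⊆ T := by
      intro x hx
      rw [Finset.mem_coe, hG, Finset.mem_filter, AK, Finset.mem_erase, mem_BK hdeg himag] at hx
      exact ⟨(hmem x).2 hx.2, hx.1.2.2⟩
    have hsub2 : T ⊆ ((G ∪ {0, -1} : Finset (𝓞 K)) : Set (𝓞 K)) := by
      intro x hx
      rw [Finset.mem_coe, Finset.mem_union, hG, Finset.mem_filter, AK, Finset.mem_erase,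
        mem_BK hdeg himag]
      by_cases h0 : x = 0
      · right; simp [h0]
      by_cases h1 : x = -1
      · right; simp [h1]
      · left; exact ⟨⟨h1, h0, hx.2⟩, (hmem x).1 hx.1⟩
    have hc1 : (G.card : ℝ) ≤ T.ncard := by
      rw [Nat.cast_le, ← Set.ncard_coe_finset]
      exact Set.ncard_le_ncard hsub1 hfin
    have hc2 : (T.ncard : ℝ) ≤ G.card + 2 := by
      have : T.ncard ≤ G.card + 2 := by
        refine (Set.ncard_le_ncard hsub2 (Finset.finite_toSet _)).trans ?_
        rw [Set.ncard_coe_finset]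
        refine (Finset.card_union_le _ _).trans ?_
        have := Finset.card_le_two (a := (0 : 𝓞 K)) (b := -1)
        omega
      exact_mod_cast this
    have e1 : cK K * X / (nmK (e : K) * nmK (f : K)) = cK K * X * (a * b) := by
      rw [ha, hb, div_eq_mul_inv, mul_inv]
    have e2 : √(X / (nmK (e : K) * nmK (f : K))) ≤ √X * (a + b) := by
      rw [div_eq_mul_inv, mul_inv, ← ha, ← hb, Real.sqrt_mul (by linarith)]
      refine mul_le_mul_of_nonneg_left ?_ hX0
      rw [Real.sqrt_le_left (by positivity)]
      nlinarith
    rw [e1] at hbd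
    have hab : 0 ≤ √X * (a + b) := by positivity
    have hC2 := mul_le_mul_of_nonneg_left e2 hC
    rw [abs_le] at hbd ⊢
    constructor <;> nlinarith [hbd.1, hbd.2]
  · rw [if_neg hcop, mul_zero, sub_zero]
    have : G = ∅ := by
      rw [hG, Finset.filter_eq_empty_iff]
      rintro x _ ⟨⟨p, hp⟩, ⟨q, hq⟩⟩
      exact hcop ⟨-p, q, by rw [show -p * e + q * f = f * q - e * p by ring, ← hp, ← hq]; ring⟩
    rw [this, Finset.card_empty, Nat.cast_zero, abs_zero]
    positivity

lemma main_sum (hdeg : Module.finrank ℚ K = 2) (himag : IsEmpty (K →+* ℝ)) :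
    ∃ C : ℝ, 0 ≤ C ∧ ∀ X : ℝ, 1 ≤ X → ∀ Y : ℝ, √X ≤ Y → 1 ≤ Y →
      |∑ x ∈ AK K X, ((dp Y x : ℝ) * (dp Y (x + 1) : ℝ)) - cK K * X * SK K Y| ≤
        C * (Y ^ 2 * (1 + Real.log Y)) := by
  obtain ⟨C, hC, h⟩ := main_count (K := K) hdeg himag
  obtain ⟨C1, hC1, h1⟩ := card_BK (K := K) hdeg himag
  obtain ⟨C2, hC2, h2⟩ := sum_inv_BK (K := K) hdeg himag
  refine ⟨C * (2 * C1 * C2 + C1 ^ 2), by positivity, fun X hX Y hXY hY => ?_⟩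
  have hl := Real.log_nonneg hY
  have h1' := h1 Y hY
  have h2' := h2 Y hY
  simp only [dp]
  rw [sum_count (AK K X) (BK K Y) (fun e z => e ∣ z) (fun e z => e ∣ z + 1), SK, Finset.mul_sum,
    ← Finset.sum_sub_distrib]
  have e1 : ∀ e ∈ BK K Y, (∑ f ∈ BK K Y, ((((AK K X).filter (fun x => e ∣ x ∧ f ∣ x + 1)).card : ℕ) : ℝ)) -
      cK K * X * (∑ f ∈ BK K Y, if IsCoprime e f then (nmK (e : K))⁻¹ * (nmK (f : K))⁻¹ else 0) =
      ∑ f ∈ BK K Y, (((((AK K X).filter (fun x => e ∣ x ∧ f ∣ x + 1)).card : ℕ) : ℝ) -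
        cK K * X * (if IsCoprime e f then (nmK (e : K))⁻¹ * (nmK (f : K))⁻¹ else 0)) := by
    intro e _
    rw [Finset.mul_sum, ← Finset.sum_sub_distrib]
  rw [Finset.sum_congr rfl e1]
  set n : ℝ := ((BK K Y).card : ℝ) with hn
  set L : ℝ := ∑ e ∈ BK K Y, (nmK (e : K))⁻¹ with hL
  have hL0 : 0 ≤ L := Finset.sum_nonneg fun e _ => inv_nonneg.2 (nmK_nonneg _)
  have hn0 : 0 ≤ n := Nat.cast_nonneg _
  calc _ ≤ ∑ e ∈ BK K Y, ∑ f ∈ BK K Y, C * (√X * ((nmK (e : K))⁻¹ + (nmK (f : K))⁻¹) + 1) := by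
        refine (Finset.abs_sum_le_sum_abs _ _).trans (Finset.sum_le_sum fun e he => ?_)
        refine (Finset.abs_sum_le_sum_abs _ _).trans (Finset.sum_le_sum fun f hf => ?_)
        rw [mem_BK hdeg himag] at he hf
        exact h X hX e f he.1 hf.1
    _ = C * (√X * (2 * (n * L)) + n ^ 2) := by
        simp only [← Finset.mul_sum, Finset.sum_add_distrib, Finset.sum_const, nsmul_eq_mul, ← hn, ← hL]
        ring
    _ ≤ C * (Y * (2 * ((C1 * Y) * (C2 * (1 + Real.log Y)))) + (C1 * Y) ^ 2) := by
        gcongr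
    _ ≤ _ := by
        have : 0 ≤ C * (C1 ^ 2 * Y ^ 2 * Real.log Y) := by positivity
        nlinarith

lemma total_sum (hdeg : Module.finrank ℚ K = 2) (himag : IsEmpty (K →+* ℝ)) :
    ∃ C : ℝ, 0 ≤ C ∧ ∀ X : ℝ, 1 ≤ X →
      |∑ x ∈ AK K X, ((dK K x : ℝ) * (dK K (x + 1) : ℝ)) - 4 * (cK K * X * SK K (√X + 1))| ≤
        C * ((√X + 1) ^ 2 * (1 + Real.log (√X + 1))) := by
  obtain ⟨C, hC, h⟩ := main_sum (K := K) hdeg himag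
  obtain ⟨C1, hC1, h1⟩ := err_sum (K := K) hdeg himag
  refine ⟨4 * C + 4 * C1, by positivity, fun X hX => ?_⟩
  set Y := √X + 1 with hYdef
  have hX0 := Real.sqrt_nonneg X
  have hXs : √X ^ 2 = X := Real.sq_sqrt (by linarith)
  have hY : 1 ≤ Y := by linarith
  have hm := h X hX Y (by linarith) hY
  have hr1 := h1 Y hY 1 isUnit_one (AK K X)
  have hr2 := h1 Y hY (-1) isUnit_one.neg ((AK K X).image (fun x => x + 1))
  rw [Finset.sum_image (fun x _ y _ h => add_right_cancel h)] at hr2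
  simp only [add_neg_cancel_right] at hr2
  have hpt : ∀ x ∈ AK K X, |(dK K x : ℝ) * (dK K (x + 1) : ℝ) - 4 * ((dp Y x : ℝ) * (dp Y (x + 1) : ℝ))| ≤
      2 * ((rK Y x : ℝ) * (dp Y (x + 1) : ℝ)) + 2 * ((rK Y (x + 1) : ℝ) * (dp Y x : ℝ)) := by
    intro x hx
    rw [AK, Finset.mem_erase, mem_BK hdeg himag] at hx
    obtain ⟨hx1, hx0, hxX⟩ := hx
    have a1 := dK_split hdeg himag Y (by linarith) x hx0 (by nlinarith)
    have a2 := dK_split hdeg himag Y (by linarith) (x + 1)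
      (fun h => hx1 (eq_neg_of_add_eq_zero_left h)) (by
        have b1 := nmK_add_le hdeg himag (x : K) 1
        rw [nmK_one, Real.sqrt_one] at b1
        have b2 : √(nmK (x : K)) ≤ √X := Real.sqrt_le_sqrt hxX
        have b3 : √(nmK ((x : K) + 1)) ≤ Y := by linarith
        rw [Real.sqrt_le_left (by linarith)] at b3
        push_cast
        exact b3)
    refine split_ineq _ _ _ _ _ _ (by exact_mod_cast a1) (by exact_mod_cast a2)
      (Nat.cast_nonneg _) (Nat.cast_nonneg _) (by exact_mod_cast rK_le_dp Y x)
      (by exact_mod_cast rK_le_dp Y (x + 1))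
  have hs : |∑ x ∈ AK K X, ((dK K x : ℝ) * (dK K (x + 1) : ℝ)) -
      4 * ∑ x ∈ AK K X, ((dp Y x : ℝ) * (dp Y (x + 1) : ℝ))| ≤
      2 * ∑ x ∈ AK K X, ((rK Y x : ℝ) * (dp Y (x + 1) : ℝ)) +
      2 * ∑ x ∈ AK K X, ((rK Y (x + 1) : ℝ) * (dp Y x : ℝ)) := by
    rw [Finset.mul_sum, Finset.mul_sum, Finset.mul_sum, ← Finset.sum_sub_distrib,
      ← Finset.sum_add_distrib]
    exact (Finset.abs_sum_le_sum_abs _ _).trans (Finset.sum_le_sum hpt)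
  rw [abs_le] at hs hm ⊢
  constructor <;> nlinarith [hs.1, hs.2, hm.1, hm.2]

end P6

section P7
open scoped Classical
open NumberField

variable {K : Type*} [Field K] [NumberField K]

lemma cK_cube : cK K ^ 3 = 8 * Real.pi ^ 3 / (|(NumberField.discr K : ℝ)|) ^ ((3 : ℝ) / 2) := by
  have h0 : 0 < |(NumberField.discr K : ℝ)| := by
    have := NumberField.discr_ne_zero K
    exact abs_pos.2 (by exact_mod_cast this)
  have : (|(NumberField.discr K : ℝ)|) ^ ((3 : ℝ) / 2) = √|(NumberField.discr K : ℝ)| ^ 3 := by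
    rw [Real.sqrt_eq_rpow, ← Real.rpow_natCast, ← Real.rpow_mul h0.le]
    norm_num
  rw [this, cK, div_pow, mul_pow]
  norm_num

lemma zetaKTwo_pos : 0 < zetaKTwo K := by
  have h0 : 0 ≤ zetaKTwo K := tsum_nonneg fun I => by positivity
  refine lt_of_le_of_ne h0 fun h => ?_
  have := zeta_rel (K := K)
  rw [← h, mul_zero] at this
  exact zero_ne_one this

lemma log_Y_bound (X : ℝ) (hX : 1 ≤ X) : 0 ≤ Real.log (√X + 1) - Real.log X / 2 ∧
    Real.log (√X + 1) - Real.log X / 2 ≤ 1 := by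
  have h1 : 1 ≤ √X := Real.one_le_sqrt.2 hX
  have h2 : Real.log X / 2 = Real.log (√X) := by rw [Real.log_sqrt (by linarith)]
  rw [h2]
  constructor
  · have := Real.log_le_log (by linarith : 0 < √X) (by linarith : √X ≤ √X + 1)
    linarith
  · rw [← Real.log_div (by linarith) (by linarith)]
    have h3 : (√X + 1) / √X ≤ 2 := by
      rw [div_le_iff₀ (by linarith)]; linarith
    have h4 : 0 < (√X + 1) / √X := by positivity
    have := Real.log_le_sub_one_of_pos h4
    linarith

lemma final_bound (hdeg : Module.finrank ℚ K = 2) (himag : IsEmpty (K →+* ℝ)) :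
    ∃ C : ℝ, 0 ≤ C ∧ ∀ X : ℝ, Real.exp 1 ≤ X →
      |∑ x ∈ AK K X, ((dK K x : ℝ) * (dK K (x + 1) : ℝ)) -
        cK K ^ 3 * (zetaKTwo K)⁻¹ * X * Real.log X ^ 2| ≤ C * (X * Real.log X) := by
  obtain ⟨C1, hC1, h1⟩ := total_sum (K := K) hdeg himag
  obtain ⟨C2, hC2, h2⟩ := SK_asymp (K := K) hdeg himag
  have hc := cK_pos (K := K)
  have hz := inv_pos.2 (zetaKTwo_pos (K := K))
  set c := cK K
  set z := (zetaKTwo K)⁻¹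
  refine ⟨12 * C1 + 12 * c * C2 + 8 * c ^ 3 * z, by positivity, fun X hX => ?_⟩
  have hX1 : 1 ≤ X := le_trans (Real.one_le_exp zero_le_one) hX
  have hl1 : 1 ≤ Real.log X := by
    rw [← Real.log_exp 1]
    exact Real.log_le_log (Real.exp_pos 1) hX
  have b1 := h1 X hX1
  have hs1 : 1 ≤ √X := Real.one_le_sqrt.2 hX1
  have hss : √X ^ 2 = X := Real.sq_sqrt (by linarith)
  have b2 := h2 (√X + 1) (by linarith)
  obtain ⟨l1, l2⟩ := log_Y_bound X hX1
  have hY2 : (√X + 1) ^ 2 ≤ 4 * X := by nlinarith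
  set δ := Real.log (√X + 1) - Real.log X / 2 with hδ
  have hlY : Real.log (√X + 1) = Real.log X / 2 + δ := by rw [hδ]; ring
  rw [hlY] at b1 b2
  set l := Real.log X
  set S := SK K (√X + 1)
  set T := ∑ x ∈ AK K X, ((dK K x : ℝ) * (dK K (x + 1) : ℝ))
  have hl3 : 1 + (l / 2 + δ) ≤ 3 * l := by linarith
  have c1 : C1 * ((√X + 1) ^ 2 * (1 + (l / 2 + δ))) ≤ 12 * C1 * (X * l) := by
    have : (√X + 1) ^ 2 * (1 + (l / 2 + δ)) ≤ (4 * X) * (3 * l) :=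
      mul_le_mul hY2 hl3 (by linarith) (by linarith)
    calc _ ≤ C1 * ((4 * X) * (3 * l)) := mul_le_mul_of_nonneg_left this hC1
      _ = _ := by ring
  have c2 : |4 * (c * X * S) - 4 * (c * X * (c ^ 2 * (l / 2 + δ) ^ 2 * z))| ≤ 12 * c * C2 * (X * l) := by
    rw [show 4 * (c * X * S) - 4 * (c * X * (c ^ 2 * (l / 2 + δ) ^ 2 * z)) =
      (4 * (c * X)) * (S - c ^ 2 * (l / 2 + δ) ^ 2 * z) by ring, abs_mul,
      abs_of_nonneg (show 0 ≤ 4 * (c * X) by positivity)]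
    calc _ ≤ (4 * (c * X)) * (C2 * (3 * l)) :=
          mul_le_mul_of_nonneg_left (b2.trans (mul_le_mul_of_nonneg_left hl3 hC2)) (by positivity)
      _ = _ := by ring
  have c3 : |4 * (c * X * (c ^ 2 * (l / 2 + δ) ^ 2 * z)) - c ^ 3 * z * X * l ^ 2| ≤
      8 * c ^ 3 * z * (X * l) := by
    rw [show 4 * (c * X * (c ^ 2 * (l / 2 + δ) ^ 2 * z)) - c ^ 3 * z * X * l ^ 2 =
      (4 * c ^ 3 * z * X) * (δ * l + δ ^ 2) by ring, abs_of_nonneg (by positivity)]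
    calc _ ≤ (4 * c ^ 3 * z * X) * (2 * l) :=
          mul_le_mul_of_nonneg_left (by nlinarith) (by positivity)
      _ = _ := by ring
  rw [abs_le] at b1 c2 c3 ⊢
  constructor <;> linarith [b1.1, b1.2, c2.1, c2.2, c3.1, c3.2]

lemma mem_AK (hdeg : Module.finrank ℚ K = 2) (himag : IsEmpty (K →+* ℝ)) (X : ℝ) (x : 𝓞 K) :
    x ∈ AK K X ↔ x ≠ 0 ∧ x ≠ -1 ∧ nmK (x : K) ≤ X := by
  rw [AK, Finset.mem_erase, mem_BK hdeg himag]
  exact ⟨fun h => ⟨h.2.1, h.1, h.2.2⟩, fun h => ⟨h.2.1, h.1, h.2.2⟩⟩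

end P7

/-- Theorem 2: for an imaginary quadratic number field `K`, as `X → +∞`,
`∑_{x ∈ 𝓞_K ∖ {0,-1}, |N(x)| ≤ X} d_K(x) d_K(x+1)
  = (8π³/(|D_K|^{3/2} ζ_K(2))) · X (log X)² + O(X log X)`. -/
theorem binary_additive_divisor_imaginary_quadratic (K : Type*) [Field K] [NumberField K]
    (hdeg : Module.finrank ℚ K = 2) (himag : IsEmpty (K →+* ℝ)) :
    (fun X : ℝ =>
        (∑' x : {x : 𝓞 K // x ≠ 0 ∧ x ≠ -1 ∧ (|Algebra.norm ℚ (x : K)| : ℝ) ≤ X},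
            (dK K x.1 * dK K (x.1 + 1) : ℝ)) -
          8 * Real.pi ^ 3 /
              ((|NumberField.discr K| : ℝ) ^ ((3 : ℝ) / 2) * zetaKTwo K) *
            X * Real.log X ^ 2)
      =O[Filter.atTop] fun X : ℝ => X * Real.log X := by
  obtain ⟨C, hC, h⟩ := final_bound (K := K) hdeg himag
  refine Asymptotics.IsBigO.of_bound C ?_
  filter_upwards [Filter.eventually_ge_atTop (Real.exp 1)] with X hX
  have hX1 : 1 ≤ X := le_trans (Real.one_le_exp zero_le_one) hX
  have h1 := h X hX
  have hset : ∀ x : 𝓞 K, x ∈ AK K X ↔ x ≠ 0 ∧ x ≠ -1 ∧ (|Algebra.norm ℚ (x : K)| : ℝ) ≤ X := by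
    exact mem_AK hdeg himag X
  have hsum : (∑' x : {x : 𝓞 K // x ≠ 0 ∧ x ≠ -1 ∧ (|Algebra.norm ℚ (x : K)| : ℝ) ≤ X},
            (dK K x.1 * dK K (x.1 + 1) : ℝ)) =
      ∑ x ∈ AK K X, ((dK K x : ℝ) * (dK K (x + 1) : ℝ)) := by
    rw [← Finset.tsum_subtype (AK K X) (fun x => (dK K x : ℝ) * (dK K (x + 1) : ℝ))]
    exact ((Equiv.subtypeEquivRight hset).tsum_eq _).symm
  rw [hsum, Real.norm_eq_abs, Real.norm_of_nonneg (mul_nonneg (by linarith) (Real.log_nonneg hX1))]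
  rw [cK_cube, ← div_eq_mul_inv, div_div] at h1
  exact h1
end

section
/- (Equation (83), Gaussian integer case of Theorem 2.) Let ℤ[i] be the ring of Gaussian integers with norm N(z) = z·z̄, and for z ∈ ℤ[i] ∖ {0} let d(z) = Card{e ∈ ℤ[i] ∖ {0} : e ∣ z}. Let S = ∑_{z ∈ ℤ[i] ∖ {0}} N(z)^{−2} (a convergent sum). Then, as X → +∞, ∑ d(x)·d(x+1) taken over all x ∈ ℤ[i] ∖ {0, −1} with N(x) ≤ X equals (4π³ / S) · X (log X)² + O(X log X). -/
/-- The naive number-of-divisors function on the Gaussian integers: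
`dG z` is the number of nonzero divisors of `z`. -/
noncomputable def dG (z : GaussianInt) : ℕ :=
  {e : GaussianInt | e ≠ 0 ∧ e ∣ z}.ncard

/-- The sum `S = ∑_{z ∈ ℤ[i] ∖ {0}} N(z)⁻²`. -/
noncomputable def SGauss : ℝ :=
  ∑' z : {z : GaussianInt // z ≠ 0}, ((Zsqrtd.norm (z : GaussianInt) : ℝ) ^ 2)⁻¹

lemma lat_sq_vol (z : GaussianInt) :
    MeasureTheory.volume {u : ℂ | ⌊u.re⌋ = z.re ∧ ⌊u.im⌋ = z.im} = 1 := by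
  have h : {u : ℂ | ⌊u.re⌋ = z.re ∧ ⌊u.im⌋ = z.im} =
      Complex.measurableEquivRealProd ⁻¹'
        (Set.Ico (z.re : ℝ) (z.re + 1) ×ˢ Set.Ico (z.im : ℝ) (z.im + 1)) := by
    ext u
    simp [Int.floor_eq_iff, Complex.measurableEquivRealProd]
  rw [h, Complex.volume_preserving_equiv_real_prod.measure_preimage
    (measurableSet_Ico.prod measurableSet_Ico).nullMeasurableSet,
    MeasureTheory.Measure.volume_eq_prod, MeasureTheory.Measure.prod_prod]
  simp

lemma lat_sq_meas (z : GaussianInt) :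
    MeasurableSet {u : ℂ | ⌊u.re⌋ = z.re ∧ ⌊u.im⌋ = z.im} := by
  have h1 : Measurable fun u : ℂ => ⌊u.re⌋ := Int.measurable_floor.comp Complex.measurable_re
  have h2 : Measurable fun u : ℂ => ⌊u.im⌋ := Int.measurable_floor.comp Complex.measurable_im
  exact (h1 (measurableSet_singleton _)).inter (h2 (measurableSet_singleton _))

lemma lat_sq_dist (z : GaussianInt) (u : ℂ) (h : ⌊u.re⌋ = z.re ∧ ⌊u.im⌋ = z.im) :
    ‖u - GaussianInt.toComplex z‖ ≤ 2 := by
  refine (Complex.norm_le_abs_re_add_abs_im _).trans ?_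
  obtain ⟨h1, h2⟩ := h
  rw [Int.floor_eq_iff] at h1 h2
  simp only [Complex.sub_re, Complex.sub_im, ← GaussianInt.intCast_re, ← GaussianInt.intCast_im]
  rw [abs_of_nonneg (by linarith), abs_of_nonneg (by linarith)]
  linarith

lemma lat_finite (w : ℂ) (R : ℝ) : {z : GaussianInt | ‖GaussianInt.toComplex z - w‖ ≤ R}.Finite := by
  obtain ⟨M, hM⟩ := exists_nat_ge (R + ‖w‖)
  have : {z : GaussianInt | ‖GaussianInt.toComplex z - w‖ ≤ R} ⊆
      (fun p : ℤ × ℤ => (⟨p.1, p.2⟩ : GaussianInt)) '' (Set.Icc (-(M:ℤ)) M ×ˢ Set.Icc (-(M:ℤ)) M) := by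
    intro z hz
    have hz' : ‖GaussianInt.toComplex z - w‖ ≤ R := hz
    have h0 : ‖GaussianInt.toComplex z‖ ≤ M := by
      have := norm_le_norm_add_norm_sub' (GaussianInt.toComplex z) w
      linarith
    have h1 := (Complex.abs_re_le_norm _).trans h0
    have h2 := (Complex.abs_im_le_norm _).trans h0
    rw [← GaussianInt.intCast_re, abs_le] at h1
    rw [← GaussianInt.intCast_im, abs_le] at h2
    refine ⟨(z.re, z.im), ⟨⟨?_, ?_⟩, ⟨?_, ?_⟩⟩, rfl⟩ <;> simp only [] <;> [have := h1.1; have := h1.2; have := h2.1; have := h2.2] <;> exact_mod_cast this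
  exact ((Set.finite_Icc _ _).prod (Set.finite_Icc _ _)).image _ |>.subset this

lemma lat_count (w : ℂ) (R : ℝ) (hR : 0 ≤ R) :
    |({z : GaussianInt | ‖GaussianInt.toComplex z - w‖ ≤ R}.ncard : ℝ) - Real.pi * R ^ 2|
      ≤ 16 * (R + 1) := by
  set F := (lat_finite w R).toFinset with hF
  rw [Set.ncard_eq_toFinset_card _ (lat_finite w R), ← hF]
  have hmem : ∀ z, z ∈ F ↔ ‖GaussianInt.toComplex z - w‖ ≤ R := by simp [hF]
  set U : Set ℂ := ⋃ z ∈ F, {u : ℂ | ⌊u.re⌋ = z.re ∧ ⌊u.im⌋ = z.im} with hU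
  have hvol : MeasureTheory.volume U = F.card := by
    rw [hU, MeasureTheory.measure_biUnion_finset]
    · simp [lat_sq_vol]
    · intro a _ b _ hab
      refine Set.disjoint_left.2 ?_
      rintro u ⟨h1, h2⟩ ⟨h3, h4⟩
      exact hab (Zsqrtd.ext (h1.symm.trans h3) (h2.symm.trans h4))
    · intro z _; exact lat_sq_meas z
  have hvb : ∀ r : ℝ, 0 ≤ r → MeasureTheory.volume (Metric.closedBall w r) = ENNReal.ofReal (Real.pi * r ^ 2) := by
    intro r hr
    rw [Complex.volume_closedBall, mul_comm, ENNReal.ofReal_mul Real.pi_pos.le, ENNReal.ofReal_pow hr]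
    congr 1
    exact (ENNReal.ofReal_coe_nnreal).symm
  have hup : (F.card : ℝ) ≤ Real.pi * (R + 2) ^ 2 := by
    have : U ⊆ Metric.closedBall w (R + 2) := by
      intro u hu
      simp only [hU, Set.mem_iUnion, exists_prop] at hu
      obtain ⟨z, hz, hu⟩ := hu
      rw [mem_closedBall_iff_norm]
      have h1 := lat_sq_dist z u hu
      have h2 := (hmem z).1 hz
      calc ‖u - w‖ ≤ ‖u - GaussianInt.toComplex z‖ + ‖GaussianInt.toComplex z - w‖ := norm_sub_le_norm_sub_add_norm_sub _ _ _
        _ ≤ _ := by linarith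
    have h := MeasureTheory.measure_mono (μ := MeasureTheory.volume) this
    rw [hvol, hvb _ (by linarith)] at h
    rw [← ENNReal.ofReal_natCast] at h
    exact (ENNReal.ofReal_le_ofReal_iff (by positivity)).1 h
  have hlo : 2 ≤ R → Real.pi * (R - 2) ^ 2 ≤ F.card := by
    intro h2
    have : Metric.closedBall w (R - 2) ⊆ U := by
      intro u hu
      rw [mem_closedBall_iff_norm] at hu
      simp only [hU, Set.mem_iUnion, exists_prop]
      refine ⟨⟨⌊u.re⌋, ⌊u.im⌋⟩, ?_, rfl, rfl⟩
      rw [hmem]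
      have h1 := lat_sq_dist ⟨⌊u.re⌋, ⌊u.im⌋⟩ u ⟨rfl, rfl⟩
      rw [norm_sub_rev] at h1
      refine (norm_sub_le_norm_sub_add_norm_sub _ u _).trans ?_
      linarith
    have h := MeasureTheory.measure_mono (μ := MeasureTheory.volume) this
    rw [hvol, hvb _ (by linarith)] at h
    rw [← ENNReal.ofReal_natCast] at h
    exact (ENNReal.ofReal_le_ofReal_iff (by positivity)).1 h
  have hpi := Real.pi_lt_four
  have hpi0 := Real.pi_pos
  rw [abs_le]
  constructor
  · by_cases h2 : 2 ≤ R
    · have := hlo h2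
      nlinarith
    · have : (0:ℝ) ≤ F.card := by positivity
      nlinarith [mul_nonneg hR hpi0.le]
  · nlinarith

noncomputable def nn (z : GaussianInt) : ℕ := z.norm.natAbs

lemma nn_real (z : GaussianInt) : (nn z : ℝ) = (z.norm : ℝ) := by
  unfold nn; exact GaussianInt.natCast_natAbs_norm z

lemma nn_norm (z : GaussianInt) : (nn z : ℝ) = ‖GaussianInt.toComplex z‖ ^ 2 := by
  rw [nn_real, GaussianInt.intCast_real_norm, Complex.normSq_eq_norm_sq]

lemma nn_mul (a b : GaussianInt) : nn (a * b) = nn a * nn b := by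
  unfold nn; rw [Zsqrtd.norm_mul, Int.natAbs_mul]

lemma nn_zero : nn 0 = 0 := by simp [nn]

lemma nn_eq_zero (z : GaussianInt) : nn z = 0 ↔ z = 0 := by
  unfold nn; rw [Int.natAbs_eq_zero, GaussianInt.norm_eq_zero]

lemma nn_pos {z : GaussianInt} (h : z ≠ 0) : 0 < nn z :=
  Nat.pos_of_ne_zero (fun h' => h ((nn_eq_zero z).1 h'))

lemma nn_posR {z : GaussianInt} (h : z ≠ 0) : (0:ℝ) < nn z := by exact_mod_cast nn_pos h

noncomputable def box (Y : ℕ) : Finset GaussianInt :=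
  (lat_finite 0 (Real.sqrt Y)).toFinset.erase 0

lemma mem_box {Y : ℕ} {z : GaussianInt} : z ∈ box Y ↔ z ≠ 0 ∧ nn z ≤ Y := by
  simp only [box, Finset.mem_erase, Set.Finite.mem_toFinset, Set.mem_ofPred_eq, sub_zero]
  rw [Real.le_sqrt (norm_nonneg _) (by positivity), ← nn_norm]
  norm_cast

lemma box_zero : box 0 = ∅ := by
  ext z
  simp only [mem_box, Finset.notMem_empty, iff_false, not_and, Nat.le_zero]
  intro h h'
  exact h ((nn_eq_zero z).1 h')

lemma box_card (Y : ℕ) : |((box Y).card : ℝ) - Real.pi * Y| ≤ 16 * (Real.sqrt Y + 1) + 1 := by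
  have h := lat_count 0 (Real.sqrt Y) (Real.sqrt_nonneg _)
  rw [Set.ncard_eq_toFinset_card _ (lat_finite 0 _), Real.sq_sqrt (by positivity)] at h
  have h0 : (0 : GaussianInt) ∈ (lat_finite 0 (Real.sqrt Y)).toFinset := by simp
  have h1 : ((box Y).card : ℝ) = ((lat_finite 0 (Real.sqrt Y)).toFinset.card : ℝ) - 1 := by
    unfold box
    rw [Finset.card_erase_of_mem h0, Nat.cast_sub (Finset.card_pos.2 ⟨0, h0⟩)]
    simp
  rw [h1]
  rw [abs_le] at h ⊢
  constructor <;> linarith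

lemma prog_count (a c s : GaussianInt) (ha : a ≠ 0) (hc : c ≠ 0) (hac : IsCoprime a c)
    (T : ℝ) (hT : 0 ≤ T) :
    |({x : GaussianInt | a ∣ x ∧ c ∣ x + 1 ∧ (nn (x - s) : ℝ) ≤ T}.ncard : ℝ)
      - Real.pi * (T / (nn a * nn c))| ≤ 16 * (Real.sqrt (T / (nn a * nn c)) + 1) := by
  obtain ⟨u, v, huv⟩ := hac
  have hd : a * c ≠ 0 := mul_ne_zero ha hc
  have hdC : GaussianInt.toComplex (a * c) ≠ 0 := by simpa using And.intro ha hc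
  have hnpos : (0:ℝ) < nn a * nn c := mul_pos (nn_posR ha) (nn_posR hc)
  have hset : {x : GaussianInt | a ∣ x ∧ c ∣ x + 1 ∧ (nn (x - s) : ℝ) ≤ T} =
      (fun t => -(u * a) + (a * c) * t) '' {z : GaussianInt | ‖GaussianInt.toComplex z -
        GaussianInt.toComplex (s + u * a) / GaussianInt.toComplex (a * c)‖ ≤
          Real.sqrt (T / (nn a * nn c))} := by
    have key : ∀ t : GaussianInt, (nn (-(u * a) + (a * c) * t - s) : ℝ) ≤ T ↔
        ‖GaussianInt.toComplex t -
        GaussianInt.toComplex (s + u * a) / GaussianInt.toComplex (a * c)‖ ≤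
          Real.sqrt (T / (nn a * nn c)) := by
      intro t
      rw [Real.le_sqrt (norm_nonneg _) (by positivity), le_div_iff₀ hnpos]
      have : (nn (-(u * a) + (a * c) * t - s) : ℝ) = ‖GaussianInt.toComplex t -
        GaussianInt.toComplex (s + u * a) / GaussianInt.toComplex (a * c)‖ ^ 2 * (nn a * nn c) := by
        rw [← Nat.cast_mul, ← nn_mul, nn_norm, nn_norm (a * c), ← mul_pow, ← norm_mul]
        congr 2
        rw [sub_mul, div_mul_cancel₀ _ hdC]
        simp only [map_add, map_mul, map_sub, map_neg]
        ring
      rw [this]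
    ext x
    simp only [Set.mem_ofPred_eq, Set.mem_image]
    constructor
    · rintro ⟨h1, h2, h3⟩
      have h4 : a * c ∣ x + u * a := by
        refine IsCoprime.mul_dvd ⟨u, v, huv⟩ (dvd_add h1 (Dvd.intro_left u rfl)) ?_
        have : x + u * a = (x + 1) - v * c := by rw [← huv]; ring
        rw [this]
        exact dvd_sub h2 (Dvd.intro_left v rfl)
      obtain ⟨t, ht⟩ := h4
      have hx : -(u * a) + (a * c) * t = x := by rw [← ht]; ring
      refine ⟨t, ?_, hx⟩
      rw [← key, hx]; exact h3
    · rintro ⟨t, ht, rfl⟩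
      refine ⟨⟨-u + c * t, by ring⟩, ⟨v + a * t, ?_⟩, (key t).2 ht⟩
      rw [← huv]; ring
  rw [hset, Set.ncard_image_of_injective]
  · have := lat_count (GaussianInt.toComplex (s + u * a) / GaussianInt.toComplex (a * c))
      (Real.sqrt (T / (nn a * nn c))) (Real.sqrt_nonneg _)
    rwa [Real.sq_sqrt (by positivity)] at this
  · intro t t' h
    simp only [add_right_inj] at h
    exact mul_left_cancel₀ hd h

lemma nn_finite (s : GaussianInt) (T : ℝ) : {x : GaussianInt | (nn (x - s) : ℝ) ≤ T}.Finite := by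
  refine (lat_finite (GaussianInt.toComplex s) (Real.sqrt T)).subset ?_
  intro x hx
  have hx' : (nn (x - s) : ℝ) ≤ T := hx
  rw [nn_norm, map_sub] at hx'
  exact Real.le_sqrt_of_sq_le hx'

lemma coprime_of_dvd {a c x : GaussianInt} (h1 : a ∣ x) (h2 : c ∣ x + 1) : IsCoprime a c := by
  obtain ⟨u, rfl⟩ := h1
  obtain ⟨v, hv⟩ := h2
  exact ⟨-u, v, by linear_combination -hv⟩

noncomputable def AA (Y : ℕ) : ℝ := ∑ a ∈ box Y, (1 : ℝ) / nn a

lemma AA_zero : AA 0 = 0 := by simp [AA, box_zero]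

lemma AA_nonneg (Y : ℕ) : 0 ≤ AA Y := Finset.sum_nonneg (fun _ _ => by positivity)

lemma box_mono {M N : ℕ} (h : M ≤ N) : box M ⊆ box N := by
  intro z; simp only [mem_box]; exact fun ⟨h1, h2⟩ => ⟨h1, h2.trans h⟩

lemma AA_succ (M : ℕ) : AA (M + 1) = AA M + ((box (M+1)).card - (box M).card : ℝ) / (M + 1) := by
  unfold AA
  have h := Finset.sum_sdiff (f := fun a => (1 : ℝ) / nn a) (box_mono (Nat.le_succ M))
  have h2 := Finset.card_sdiff_add_card_eq_card (box_mono (Nat.le_succ M))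
  have h3 : ∑ a ∈ box (M + 1) \ box M, (1 : ℝ) / nn a = ∑ a ∈ box (M + 1) \ box M, (1 : ℝ) / (M + 1) := by
    refine Finset.sum_congr rfl ?_
    intro a ha
    simp only [Finset.mem_sdiff, mem_box, not_and, not_le] at ha
    have : nn a = M + 1 := le_antisymm ha.1.2 (ha.2 ha.1.1)
    rw [this]; push_cast; rfl
  simp only [Nat.succ_eq_add_one] at h h2
  rw [← h, h3, Finset.sum_const, ← h2, nsmul_eq_mul]
  push_cast
  ring

noncomputable def EE (Y : ℕ) : ℝ := (box Y).card - Real.pi * Y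

lemma EE_zero : EE 0 = 0 := by simp [EE, box_zero]

lemma EE_bound (Y : ℕ) (hY : 1 ≤ Y) : |EE Y| ≤ 33 * Real.sqrt Y := by
  have := box_card Y
  have h1 : 1 ≤ Real.sqrt Y := by rw [Real.one_le_sqrt]; exact_mod_cast hY
  unfold EE; linarith

lemma AA_formula (M : ℕ) : AA M = Real.pi * (harmonic M : ℝ) + EE M / (M + 1)
    + ∑ k ∈ Finset.range M, EE (k + 1) / ((k + 1) * (k + 2)) := by
  induction M with
  | zero => simp [AA_zero, EE_zero]
  | succ M ih =>
    rw [AA_succ, ih, Finset.sum_range_succ, harmonic_succ]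
    have : ((box (M+1)).card - (box M).card : ℝ) = EE (M + 1) - EE M + Real.pi := by
      unfold EE; push_cast; ring
    rw [this]
    push_cast
    field_simp
    ring

lemma AA_est : ∃ C : ℝ, 0 < C ∧ ∀ M : ℕ, 1 ≤ M → |AA M - Real.pi * Real.log M| ≤ C := by
  have hs : Summable (fun k : ℕ => 33 * (1 / ((k + 1 : ℕ) : ℝ) ^ (3 / 2 : ℝ))) :=
    ((summable_nat_add_iff 1).2 (Real.summable_one_div_nat_rpow.2 (by norm_num))).mul_left _
  refine ⟨Real.pi + 33 + ∑' k : ℕ, 33 * (1 / ((k + 1 : ℕ) : ℝ) ^ (3 / 2 : ℝ)), ?_, ?_⟩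
  · have : 0 ≤ ∑' k : ℕ, 33 * (1 / ((k + 1 : ℕ) : ℝ) ^ (3 / 2 : ℝ)) := tsum_nonneg (fun k => by positivity)
    have := Real.pi_pos
    linarith
  intro M hM
  have hM' : (1:ℝ) ≤ M := by exact_mod_cast hM
  rw [AA_formula]
  have h1 : |EE M / (M + 1)| ≤ 33 := by
    rw [abs_div, abs_of_pos (by positivity : (0:ℝ) < M + 1), div_le_iff₀ (by positivity)]
    refine (EE_bound M hM).trans ?_
    have : Real.sqrt M ≤ M := by
      rw [Real.sqrt_le_left (by positivity)]; nlinarith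
    linarith
  have h2 : |∑ k ∈ Finset.range M, EE (k + 1) / ((k + 1) * (k + 2))| ≤
      ∑' k : ℕ, 33 * (1 / ((k + 1 : ℕ) : ℝ) ^ (3 / 2 : ℝ)) := by
    refine (Finset.abs_sum_le_sum_abs _ _).trans ?_
    refine le_trans ?_ (hs.sum_le_tsum (Finset.range M) (fun k _ => by positivity))
    refine Finset.sum_le_sum ?_
    intro k _
    have hk : (0:ℝ) < ((k + 1 : ℕ) : ℝ) := by positivity
    rw [abs_div, abs_of_pos (by positivity : (0:ℝ) < (k + 1) * (k + 2)), mul_one_div]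
    have h3 := EE_bound (k + 1) (by omega)
    have h4 : Real.sqrt ((k + 1 : ℕ) : ℝ) * ((k + 1 : ℕ) : ℝ) ^ (3 / 2 : ℝ) = ((k:ℝ) + 1) ^ 2 := by
      rw [Real.sqrt_eq_rpow, ← Real.rpow_add hk]
      norm_num
    rw [div_le_div_iff₀ (by positivity) (by positivity)]
    calc |EE (k + 1)| * ((k + 1 : ℕ) : ℝ) ^ (3 / 2 : ℝ) ≤ 33 * Real.sqrt ((k + 1 : ℕ) : ℝ) * ((k + 1 : ℕ) : ℝ) ^ (3 / 2 : ℝ) := by gcongr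
      _ = 33 * ((k:ℝ) + 1) ^ 2 := by rw [mul_assoc, h4]
      _ ≤ _ := by nlinarith
  have h5 := harmonic_le_one_add_log M
  have h6 := log_add_one_le_harmonic M
  have h7 : Real.log M ≤ Real.log ((M + 1 : ℕ) : ℝ) := Real.log_le_log (by positivity) (by push_cast; linarith)
  have hpi := Real.pi_pos
  rw [abs_le] at *
  have h8 : Real.pi * Real.log M ≤ Real.pi * (harmonic M : ℝ) := by gcongr; linarith
  have h9 : Real.pi * (harmonic M : ℝ) ≤ Real.pi + Real.pi * Real.log M := by nlinarith
  constructor <;> linarith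

lemma box_one : box 1 = {1, -1, ⟨0, 1⟩, ⟨0, -1⟩} := by
  ext z
  rw [mem_box]
  constructor
  · rintro ⟨h0, h1⟩
    have h2 : (nn z : ℤ) = z.re * z.re + z.im * z.im := by
      unfold nn
      rw [GaussianInt.abs_natCast_norm, Zsqrtd.norm_def]; ring
    have h3 : z.re * z.re + z.im * z.im ≤ 1 := by rw [← h2]; exact_mod_cast h1
    obtain ⟨x, y⟩ := z
    simp only at h3
    have a1 : x ≤ 1 := by nlinarith
    have a2 : -1 ≤ x := by nlinarith
    have a3 : y ≤ 1 := by nlinarith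
    have a4 : -1 ≤ y := by nlinarith
    interval_cases x <;> interval_cases y <;> first | (exfalso; omega) | (exfalso; exact h0 rfl) | decide
  · intro h
    simp only [Finset.mem_insert, Finset.mem_singleton] at h
    rcases h with rfl | rfl | rfl | rfl <;> refine ⟨by decide, by decide⟩

lemma box_one_card : (box 1).card = 4 := by
  rw [box_one]; decide

lemma mem_box_one {z : GaussianInt} : z ∈ box 1 ↔ IsUnit z := by
  rw [mem_box, ← Zsqrtd.norm_eq_one_iff]
  constructor
  · rintro ⟨h, h1⟩
    exact le_antisymm h1 (nn_pos h)
  · intro h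
    refine ⟨?_, h.le⟩
    rintro rfl
    simp at h

open Classical in
noncomputable def cop (Y : ℕ) : Finset (GaussianInt × GaussianInt) :=
  (box Y ×ˢ box Y).filter (fun p => IsCoprime p.1 p.2)

lemma mem_cop {Y : ℕ} {p : GaussianInt × GaussianInt} :
    p ∈ cop Y ↔ p.1 ∈ box Y ∧ p.2 ∈ box Y ∧ IsCoprime p.1 p.2 := by
  simp [cop, and_assoc]

noncomputable def BB (Y : ℕ) : ℝ := ∑ p ∈ cop Y, (1 : ℝ) / (nn p.1 * nn p.2)

lemma BB_nonneg (Y : ℕ) : 0 ≤ BB Y := Finset.sum_nonneg (fun _ _ => by positivity)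

lemma BB_zero : BB 0 = 0 := by simp [BB, cop, box_zero]

def QQ (g : GaussianInt) (p : GaussianInt × GaussianInt) : Prop :=
  ∃ a c, p.1 = g * a ∧ p.2 = g * c ∧ IsCoprime a c

lemma QQ_dvd {g h : GaussianInt} {p : GaussianInt × GaussianInt} (hg : QQ g p) (hh : QQ h p) : g ∣ h := by
  obtain ⟨a, c, h1, h2, h3⟩ := hg
  obtain ⟨a', c', h1', h2', u, v, h3'⟩ := hh
  have : h = g * (u * a + v * c) := by
    linear_combination (-h) * h3' + u * (h1 - h1') + v * (h2 - h2')
  exact ⟨_, this⟩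

lemma QQ_exists {p : GaussianInt × GaussianInt} (h : p.1 ≠ 0) : ∃ g, g ≠ 0 ∧ QQ g p := by
  obtain ⟨a, ha⟩ := EuclideanDomain.gcd_dvd_left p.1 p.2
  obtain ⟨c, hc⟩ := EuclideanDomain.gcd_dvd_right p.1 p.2
  have hb := EuclideanDomain.gcd_eq_gcd_ab p.1 p.2
  set g := EuclideanDomain.gcd p.1 p.2
  have hg : g ≠ 0 := by
    intro h0; rw [h0, zero_mul] at ha; exact h ha
  refine ⟨g, hg, a, c, ha, hc, EuclideanDomain.gcdA p.1 p.2, EuclideanDomain.gcdB p.1 p.2, ?_⟩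
  apply mul_left_cancel₀ hg
  have h1 : p.1 * EuclideanDomain.gcdA p.1 p.2 = g * a * EuclideanDomain.gcdA p.1 p.2 := by
    rw [← ha]
  have h2 : p.2 * EuclideanDomain.gcdB p.1 p.2 = g * c * EuclideanDomain.gcdB p.1 p.2 := by
    rw [← hc]
  linear_combination -hb - h1 - h2

open Classical in
lemma QQ_card {Y : ℕ} {p : GaussianInt × GaussianInt} (h : p.1 ∈ box Y) :
    ((box Y).filter (fun g => QQ g p)).card = 4 := by
  rw [mem_box] at h
  obtain ⟨g, hg, hQ⟩ := QQ_exists h.1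
  rw [← box_one_card]
  have : (box Y).filter (fun g => QQ g p) = (box 1).image (fun u => g * u) := by
    ext k
    simp only [Finset.mem_filter, Finset.mem_image, mem_box_one]
    constructor
    · rintro ⟨_, hk⟩
      obtain ⟨u, hu⟩ := associated_of_dvd_dvd (QQ_dvd hQ hk) (QQ_dvd hk hQ)
      exact ⟨u, u.isUnit, hu⟩
    · rintro ⟨u, hu, rfl⟩
      obtain ⟨a, c, h1, h2, h3⟩ := hQ
      obtain ⟨u, rfl⟩ := hu
      have hq : QQ (g * u) p := by
        refine ⟨(u⁻¹ : GaussianIntˣ) * a, (u⁻¹ : GaussianIntˣ) * c, ?_, ?_, ?_⟩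
        · rw [h1, mul_assoc, Units.mul_inv_cancel_left]
        · rw [h2, mul_assoc, Units.mul_inv_cancel_left]
        · rwa [isCoprime_mul_unit_left (Units.isUnit _)]
      refine ⟨?_, hq⟩
      rw [mem_box]
      refine ⟨mul_ne_zero hg u.ne_zero, ?_⟩
      obtain ⟨a', c', h1', _⟩ := hq
      rw [h1', nn_mul] at h
      have ha' : a' ≠ 0 := by rintro rfl; simp at h
      exact (Nat.le_mul_of_pos_right _ (nn_pos ha')).trans h.2
  rw [this, Finset.card_image_of_injective _ (mul_right_injective₀ hg)]

open Classical in
lemma AA_BB (Y : ℕ) : 4 * AA Y ^ 2 = ∑ g ∈ box Y, 1 / (nn g : ℝ) ^ 2 * BB (Y / nn g) := by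
  have h1 : 4 * AA Y ^ 2 = ∑ p ∈ box Y ×ˢ box Y, ∑ g ∈ (box Y).filter (fun g => QQ g p),
      (1 : ℝ) / (nn p.1 * nn p.2) := by
    have : ∀ p ∈ box Y ×ˢ box Y, ∑ g ∈ (box Y).filter (fun g => QQ g p),
      (1 : ℝ) / (nn p.1 * nn p.2) = 4 * ((1 : ℝ) / (nn p.1 * nn p.2)) := by
      intro p hp
      rw [Finset.sum_const, QQ_card (Finset.mem_product.1 hp).1]
      simp
    rw [Finset.sum_congr rfl this, ← Finset.mul_sum, Finset.sum_product, sq]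
    unfold AA
    rw [Finset.sum_mul_sum]
    congr 1
    refine Finset.sum_congr rfl fun a _ => Finset.sum_congr rfl fun c _ => ?_
    rw [one_div_mul_one_div]
  have h2 : ∀ g ∈ box Y, 1 / (nn g : ℝ) ^ 2 * BB (Y / nn g) =
      ∑ p ∈ (box Y ×ˢ box Y).filter (fun p => QQ g p), (1 : ℝ) / (nn p.1 * nn p.2) := by
    intro g hg
    rw [mem_box] at hg
    unfold BB
    rw [Finset.mul_sum]
    refine Finset.sum_bij (fun p _ => (g * p.1, g * p.2)) ?_ ?_ ?_ ?_
    · intro p hp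
      rw [mem_cop, mem_box, mem_box] at hp
      simp only [Finset.mem_filter, Finset.mem_product, mem_box, nn_mul]
      refine ⟨⟨⟨mul_ne_zero hg.1 hp.1.1, ?_⟩, ⟨mul_ne_zero hg.1 hp.2.1.1, ?_⟩⟩, p.1, p.2, rfl, rfl, hp.2.2⟩
      · rw [mul_comm]; exact (Nat.le_div_iff_mul_le (nn_pos hg.1)).1 hp.1.2
      · rw [mul_comm]; exact (Nat.le_div_iff_mul_le (nn_pos hg.1)).1 hp.2.1.2
    · intro p _ q _ h
      simp only [Prod.mk.injEq] at h
      exact Prod.ext (mul_left_cancel₀ hg.1 h.1) (mul_left_cancel₀ hg.1 h.2)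
    · intro p hp
      simp only [Finset.mem_filter, Finset.mem_product, mem_box] at hp
      obtain ⟨⟨⟨h1, h2⟩, h3, h4⟩, a, c, h5, h6, h7⟩ := hp
      refine ⟨(a, c), ?_, by rw [← h5, ← h6]⟩
      rw [mem_cop, mem_box, mem_box]
      rw [h5] at h1 h2
      rw [h6] at h3 h4
      rw [nn_mul] at h2 h4
      refine ⟨⟨right_ne_zero_of_mul h1, ?_⟩, ⟨right_ne_zero_of_mul h3, ?_⟩, h7⟩
      · rw [mul_comm] at h2; exact (Nat.le_div_iff_mul_le (nn_pos hg.1)).2 h2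
      · rw [mul_comm] at h4; exact (Nat.le_div_iff_mul_le (nn_pos hg.1)).2 h4
    · intro p _
      simp only [nn_mul]
      push_cast
      rw [one_div_mul_one_div]
      congr 1; ring
  rw [h1, Finset.sum_congr rfl h2]
  simp_rw [Finset.sum_filter]
  rw [Finset.sum_comm]

lemma BB_diff {M N : ℕ} (h : M ≤ N) : |BB N - BB M| ≤ AA N ^ 2 - AA M ^ 2 := by
  have key : ∀ M, AA M ^ 2 = ∑ p ∈ box M ×ˢ box M, (1 : ℝ) / (nn p.1 * nn p.2) := by
    intro M
    rw [Finset.sum_product, sq]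
    unfold AA
    rw [Finset.sum_mul_sum]
    refine Finset.sum_congr rfl fun a _ => Finset.sum_congr rfl fun c _ => ?_
    rw [one_div_mul_one_div]
  have hsub : cop M ⊆ cop N := by
    intro p; simp only [mem_cop]
    exact fun ⟨a, b, c⟩ => ⟨box_mono h a, box_mono h b, c⟩
  have hsub2 : box M ×ˢ box M ⊆ box N ×ˢ box N := Finset.product_subset_product (box_mono h) (box_mono h)
  classical
  have h1 := Finset.sum_sdiff (f := fun p : GaussianInt × GaussianInt => (1 : ℝ) / (nn p.1 * nn p.2)) hsub
  have h2 := Finset.sum_sdiff (f := fun p : GaussianInt × GaussianInt => (1 : ℝ) / (nn p.1 * nn p.2)) hsub2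
  rw [key, key, ← h2]
  unfold BB
  rw [← h1, add_sub_cancel_right, add_sub_cancel_right, abs_of_nonneg (Finset.sum_nonneg fun _ _ => by positivity)]
  refine Finset.sum_le_sum_of_subset_of_nonneg ?_ (fun _ _ _ => by positivity)
  intro p
  simp only [Finset.mem_sdiff, mem_cop, Finset.mem_product]
  rintro ⟨⟨a, b, c⟩, d⟩
  exact ⟨⟨a, b⟩, fun e => d ⟨e.1, e.2, c⟩⟩

lemma AA_mono {M N : ℕ} (h : M ≤ N) : AA M ≤ AA N :=
  Finset.sum_le_sum_of_subset_of_nonneg (box_mono h) (fun _ _ _ => by positivity)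

lemma AA_diff : ∃ C : ℝ, 0 < C ∧ ∀ Y n : ℕ, 1 ≤ Y → 1 ≤ n → AA Y - AA (Y / n) ≤ C * (1 + Real.log n) := by
  obtain ⟨C, hC, hA⟩ := AA_est
  have hpi := Real.pi_pos
  have hl2 : 0 < Real.log 2 := Real.log_pos (by norm_num)
  refine ⟨2 * C + Real.pi * Real.log 2 + Real.pi, by positivity, ?_⟩
  intro Y n hY hn
  have hn' : (1:ℝ) ≤ n := by exact_mod_cast hn
  have hY' : (1:ℝ) ≤ Y := by exact_mod_cast hY
  have hln : 0 ≤ Real.log n := Real.log_nonneg hn'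
  have hAY := (abs_le.1 (hA Y hY)).2
  have hexp : (2 * C + Real.pi * Real.log 2) * Real.log n ≥ 0 := by positivity
  by_cases h : n ≤ Y
  · have h1 : 1 ≤ Y / n := (Nat.one_le_div_iff (by omega)).2 h
    have hAq := (abs_le.1 (hA (Y / n) h1)).1
    have h2 : Y ≤ 2 * n * (Y / n) := by
      have := Nat.div_add_mod Y n
      have := Nat.mod_lt Y (by omega : n > 0)
      nlinarith
    have h3 : Real.log Y ≤ Real.log 2 + Real.log n + Real.log ((Y / n : ℕ) : ℝ) := by
      have hq : (0:ℝ) < ((Y / n : ℕ) : ℝ) := by exact_mod_cast h1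
      rw [← Real.log_mul (by norm_num) (by positivity), ← Real.log_mul (by positivity) (by positivity)]
      exact Real.log_le_log (by positivity) (by exact_mod_cast h2)
    have h4 := mul_le_mul_of_nonneg_left h3 hpi.le
    nlinarith
  · rw [Nat.div_eq_of_lt (by omega), AA_zero]
    have h3 : Real.log Y ≤ Real.log n := Real.log_le_log (by positivity) (by exact_mod_cast (by omega : Y ≤ n))
    have h4 := mul_le_mul_of_nonneg_left h3 hpi.le
    nlinarith [mul_pos hpi hl2]

lemma summ_G : Summable (fun z : GaussianInt => Real.sqrt (nn z) / (nn z : ℝ) ^ 2) := by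
  have h := EisensteinSeries.summable_one_div_norm_rpow (k := 3) (by norm_num)
  have hinj : Function.Injective (fun z : GaussianInt => (![z.re, z.im] : Fin 2 → ℤ)) := by
    intro z w hzw
    have h0 := congrFun hzw 0
    have h1 := congrFun hzw 1
    exact Zsqrtd.ext (by simpa using h0) (by simpa using h1)
  refine Summable.of_nonneg_of_le (fun z => by positivity) ?_ (h.comp_injective hinj)
  intro z
  by_cases hz : z = 0
  · subst hz; simp only [nn_zero]; simp
  have hp := nn_posR hz
  set v : Fin 2 → ℤ := ![z.re, z.im] with hv
  have hv0 : v ≠ 0 := by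
    intro h0; apply hz; apply hinj; 
    change v = _
    rw [h0]; ext i; fin_cases i <;> simp
  have hvp : 0 < ‖v‖ := norm_pos_iff.2 hv0
  have hn : (nn z : ℝ) = (z.re:ℝ) * z.re + z.im * z.im := by
    rw [nn_real, Zsqrtd.norm_def]; push_cast; ring
  have hle : ‖v‖ ≤ Real.sqrt (nn z) := by
    rw [pi_norm_le_iff_of_nonneg (Real.sqrt_nonneg _)]
    intro i
    apply Real.le_sqrt_of_sq_le
    rw [hn]
    fin_cases i
    · simp only [hv, Fin.zero_eta, Matrix.cons_val_zero, Int.norm_eq_abs, sq_abs]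
      nlinarith [mul_self_nonneg (z.im : ℝ)]
    · simp only [hv, Fin.mk_one, Matrix.cons_val_one, Matrix.cons_val_zero, Int.norm_eq_abs, sq_abs]
      nlinarith [mul_self_nonneg (z.re : ℝ)]
  simp only [Function.comp]
  rw [Real.rpow_neg hvp.le]
  have h3 : ‖v‖ ^ (3:ℝ) = ‖v‖ ^ 3 := by exact_mod_cast Real.rpow_natCast ‖v‖ 3
  rw [h3, ← one_div, div_le_div_iff₀ (by positivity) (by positivity)]
  have hs : (nn z : ℝ) = Real.sqrt (nn z) ^ 2 := (Real.sq_sqrt hp.le).symm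
  calc Real.sqrt (nn z) * ‖v‖ ^ 3 ≤ Real.sqrt (nn z) * Real.sqrt (nn z) ^ 3 := by gcongr
    _ = 1 * (Real.sqrt (nn z) ^ 2) ^ 2 := by ring
    _ = 1 * (nn z : ℝ) ^ 2 := by rw [← hs]

lemma summ_S : Summable (fun z : GaussianInt => 1 / (nn z : ℝ) ^ 2) := by
  refine Summable.of_nonneg_of_le (fun z => by positivity) ?_ summ_G
  intro z
  by_cases hz : z = 0
  · subst hz; simp [nn_zero]
  gcongr
  rw [Real.one_le_sqrt]
  exact_mod_cast nn_pos hz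

noncomputable def SS : ℝ := ∑' z : GaussianInt, 1 / (nn z : ℝ) ^ 2

lemma SS_pos : 0 < SS := by
  refine summ_S.tsum_pos (fun z => by positivity) 1 ?_
  have := nn_posR (one_ne_zero : (1 : GaussianInt) ≠ 0)
  positivity

lemma BB_est : ∃ C : ℝ, 0 < C ∧ ∀ Y : ℕ, 1 ≤ Y →
    |BB Y - 4 * Real.pi ^ 2 / SS * Real.log Y ^ 2| ≤ C * (1 + Real.log Y) := by
  obtain ⟨C, hC, hA⟩ := AA_est
  obtain ⟨C', hC', hD⟩ := AA_diff
  have hpi := Real.pi_pos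
  set W := ∑' z : GaussianInt, Real.sqrt (nn z) / (nn z : ℝ) ^ 2 with hW
  have hW0 : 0 ≤ W := tsum_nonneg (fun z => by positivity)
  refine ⟨(4 * (C + Real.pi) * C' * W + 4 * C * (C + 2 * Real.pi)) / SS, ?_, ?_⟩
  · have := SS_pos
    positivity
  intro Y hY
  have hl : 0 ≤ Real.log Y := Real.log_nonneg (by exact_mod_cast hY)
  have hAY := hA Y hY
  have hAY1 : AA Y ≤ (C + Real.pi) * (1 + Real.log Y) := by
    have := (abs_le.1 hAY).2
    nlinarith [mul_nonneg hC.le hl]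
  have h1 : SS * BB Y - 4 * AA Y ^ 2 = ∑' z : GaussianInt, 1 / (nn z : ℝ) ^ 2 * (BB Y - BB (Y / nn z)) := by
    have h2 : HasSum (fun g : GaussianInt => 1 / (nn g : ℝ) ^ 2 * BB (Y / nn g)) (4 * AA Y ^ 2) := by
      rw [AA_BB]
      apply hasSum_sum_of_ne_finset_zero
      intro g hg
      by_cases h0 : g = 0
      · subst h0; simp [nn_zero]
      rw [mem_box] at hg
      have : Y < nn g := by
        by_contra h; exact hg ⟨h0, not_lt.1 h⟩
      rw [Nat.div_eq_of_lt this, BB_zero, mul_zero]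
    have h3 : HasSum (fun g : GaussianInt => 1 / (nn g : ℝ) ^ 2 * BB Y) (SS * BB Y) := summ_S.hasSum.mul_right _
    rw [← (h3.sub h2).tsum_eq]
    congr 1; ext g; ring
  have hterm : ∀ z : GaussianInt, ‖1 / (nn z : ℝ) ^ 2 * (BB Y - BB (Y / nn z))‖ ≤
      (4 * AA Y * C') * (Real.sqrt (nn z) / (nn z : ℝ) ^ 2) := by
    intro z
    by_cases h0 : z = 0
    · subst h0; simp [nn_zero]
    have hn := nn_pos h0
    have hnR := nn_posR h0
    rw [norm_mul, Real.norm_of_nonneg (by positivity), Real.norm_eq_abs]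
    have h2 := BB_diff (Nat.div_le_self Y (nn z))
    have h3 := hD Y (nn z) hY hn
    have h4 : 1 + Real.log (nn z) ≤ 2 * Real.sqrt (nn z) := by
      have h5 := Real.log_le_sub_one_of_pos (Real.sqrt_pos.2 hnR)
      rw [Real.log_sqrt hnR.le] at h5
      linarith
    have h6 := AA_mono (Nat.div_le_self Y (nn z))
    have h7 := AA_nonneg (Y / nn z)
    have h8 : |BB Y - BB (Y / nn z)| ≤ 4 * AA Y * C' * Real.sqrt (nn z) := by
      calc _ ≤ _ := h2
        _ = (AA Y + AA (Y / nn z)) * (AA Y - AA (Y / nn z)) := by ring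
        _ ≤ (AA Y + AA Y) * (C' * (2 * Real.sqrt (nn z))) := by
          have : C' * (1 + Real.log (nn z)) ≤ C' * (2 * Real.sqrt (nn z)) := by gcongr
          apply mul_le_mul (by linarith) (by linarith) (by linarith) (by linarith)
        _ = _ := by ring
    calc _ ≤ 1 / (nn z : ℝ) ^ 2 * (4 * AA Y * C' * Real.sqrt (nn z)) := by gcongr
      _ = _ := by ring
  have h9 : |SS * BB Y - 4 * AA Y ^ 2| ≤ 4 * AA Y * C' * W := by
    rw [h1]
    exact tsum_of_norm_bounded (summ_G.hasSum.mul_left _) hterm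
  have h10 : |4 * AA Y ^ 2 - 4 * Real.pi ^ 2 * Real.log Y ^ 2| ≤ 4 * C * (C + 2 * Real.pi) * (1 + Real.log Y) := by
    have : 4 * AA Y ^ 2 - 4 * Real.pi ^ 2 * Real.log Y ^ 2 =
      4 * ((AA Y - Real.pi * Real.log Y) * (AA Y + Real.pi * Real.log Y)) := by ring
    rw [this, abs_mul, abs_mul, abs_of_pos (by norm_num : (0:ℝ) < 4), mul_assoc, mul_assoc]
    gcongr
    have h11 := AA_nonneg Y
    rw [abs_of_nonneg (by positivity)]
    nlinarith [mul_nonneg hC.le hl, mul_nonneg hpi.le hl]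
  have hS := SS_pos
  have h12 : BB Y - 4 * Real.pi ^ 2 / SS * Real.log Y ^ 2 =
      ((SS * BB Y - 4 * AA Y ^ 2) + (4 * AA Y ^ 2 - 4 * Real.pi ^ 2 * Real.log Y ^ 2)) / SS := by
    field_simp; ring
  rw [h12, abs_div, abs_of_pos hS, div_mul_eq_mul_div]
  gcongr
  refine (abs_add_le _ _).trans ?_
  have h13 : 4 * AA Y * C' * W ≤ 4 * ((C + Real.pi) * (1 + Real.log Y)) * C' * W := by gcongr
  linarith

open Classical in
noncomputable def ff (Y : ℕ) (x : GaussianInt) : ℕ := ((box Y).filter (fun a => a ∣ x)).card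
open Classical in
noncomputable def gg (Y : ℕ) (x : GaussianInt) : ℕ :=
  ((box Y).filter (fun a => a ∣ x ∧ nn x ≤ Y * nn a)).card

lemma gg_le_ff (Y : ℕ) (x : GaussianInt) : gg Y x ≤ ff Y x := by
  classical
  unfold gg ff
  apply Finset.card_le_card
  intro a
  simp only [Finset.mem_filter]
  exact fun ⟨h1, h2, _⟩ => ⟨h1, h2⟩

lemma dG_eq (Y : ℕ) (x : GaussianInt) (hx : x ≠ 0) (hY : nn x ≤ Y ^ 2) :
    dG x + gg Y x = 2 * ff Y x := by
  classical
  have hdvd : ∀ e, e ∣ x → e ≠ 0 := by rintro e ⟨k, rfl⟩; exact left_ne_zero_of_mul hx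
  have hle : ∀ e, e ∣ x → nn e ≤ nn x := by
    rintro e ⟨k, rfl⟩
    rw [nn_mul]; exact Nat.le_mul_of_pos_right _ (nn_pos (right_ne_zero_of_mul hx))
  set D1 := (box Y).filter (fun a => a ∣ x) with hD1
  set D2 := (box (nn x)).filter (fun a => a ∣ x ∧ nn x ≤ Y * nn a) with hD2
  have m1 : ∀ e, e ∈ D1 ↔ e ∣ x ∧ nn e ≤ Y := by
    intro e; simp only [hD1, Finset.mem_filter, mem_box]
    exact ⟨fun h => ⟨h.2, h.1.2⟩, fun h => ⟨⟨hdvd e h.1, h.2⟩, h.1⟩⟩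
  have m2 : ∀ e, e ∈ D2 ↔ e ∣ x ∧ nn x ≤ Y * nn e := by
    intro e; simp only [hD2, Finset.mem_filter, mem_box]
    exact ⟨fun h => h.2, fun h => ⟨⟨hdvd e h.1, hle e h.1⟩, h⟩⟩
  have hd : dG x = (D1 ∪ D2).card := by
    unfold dG
    rw [← Set.ncard_coe_finset]
    congr 1
    ext e
    simp only [Set.mem_ofPred_eq, Finset.coe_union, Set.mem_union, Finset.mem_coe, m1, m2]
    constructor
    · rintro ⟨_, h⟩
      by_cases h1 : nn e ≤ Y
      · exact Or.inl ⟨h, h1⟩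
      · refine Or.inr ⟨h, ?_⟩
        have : Y * Y ≤ Y * nn e := Nat.mul_le_mul_left _ (by omega)
        nlinarith
    · rintro (h | h) <;> exact ⟨hdvd e h.1, h.1⟩
  have hg : gg Y x = (D1 ∩ D2).card := by
    unfold gg
    congr 1
    ext e
    simp only [Finset.mem_inter, m1, m2, Finset.mem_filter, mem_box]
    constructor
    · rintro ⟨⟨_, h1⟩, h2, h3⟩; exact ⟨⟨h2, h1⟩, h2, h3⟩
    · rintro ⟨⟨h1, h2⟩, _, h3⟩; exact ⟨⟨hdvd e h1, h2⟩, h1, h3⟩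
  have hdiv : ∀ e k, e * k = x → x / e = k := by
    rintro e k rfl
    exact mul_div_cancel_left₀ k (left_ne_zero_of_mul hx)
  have hc : D1.card = D2.card := by
    refine Finset.card_nbij' (fun e => x / e) (fun e => x / e) ?_ ?_ ?_ ?_
    · intro e he
      rw [Finset.mem_coe, m1] at he
      obtain ⟨⟨k, hk⟩, h⟩ := he
      simp only [Finset.mem_coe]
      rw [hdiv e k hk.symm, m2]
      refine ⟨⟨e, by rw [hk, mul_comm]⟩, ?_⟩
      rw [hk, nn_mul]; exact Nat.mul_le_mul_right _ h
    · intro e he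
      rw [Finset.mem_coe, m2] at he
      obtain ⟨⟨k, hk⟩, h⟩ := he
      simp only [Finset.mem_coe]
      rw [hdiv e k hk.symm, m1]
      refine ⟨⟨e, by rw [hk, mul_comm]⟩, ?_⟩
      rw [hk, nn_mul, mul_comm] at h
      exact Nat.le_of_mul_le_mul_right h (nn_pos (hdvd e ⟨k, hk⟩))
    · intro e he
      rw [Finset.mem_coe, m1] at he
      obtain ⟨⟨k, hk⟩, h⟩ := he
      simp only []
      rw [hdiv e k hk.symm, hdiv k e (by rw [hk, mul_comm])]
    · intro e he
      rw [Finset.mem_coe, m2] at he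
      obtain ⟨⟨k, hk⟩, h⟩ := he
      simp only []
      rw [hdiv e k hk.symm, hdiv k e (by rw [hk, mul_comm])]
  have := Finset.card_union_add_card_inter D1 D2
  rw [hd, hg, this, ← hc]
  unfold ff
  rw [← hD1]; ring

open Classical in
lemma sum_swap (P : Finset GaussianInt) (Y : ℕ) (p q : GaussianInt → GaussianInt → Prop)
    (hpq : ∀ a c x, p a x → q c x → IsCoprime a c) (f g : GaussianInt → ℕ)
    (hf : ∀ x, f x = ((box Y).filter (fun a => p a x)).card)
    (hg : ∀ x, g x = ((box Y).filter (fun a => q a x)).card) :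
    ∑ x ∈ P, ((f x : ℝ) * g x) =
    ∑ s ∈ cop Y, ((P.filter (fun x => p s.1 x ∧ q s.2 x)).card : ℝ) := by
  have h1 : ∀ x ∈ P, ((f x : ℝ) * g x) =
      ∑ s ∈ cop Y, if p s.1 x ∧ q s.2 x then (1:ℝ) else 0 := by
    intro x _
    rw [hf, hg, ← Nat.cast_mul, ← Finset.card_product, ← Finset.sum_filter, Finset.sum_const, nsmul_eq_mul, mul_one]
    congr 2
    ext s
    simp only [Finset.mem_product, Finset.mem_filter, mem_cop]
    constructor
    · rintro ⟨⟨h1, h2⟩, h3, h4⟩; exact ⟨⟨h1, h3, hpq _ _ _ h2 h4⟩, h2, h4⟩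
    · rintro ⟨⟨h1, h2, _⟩, h3, h4⟩; exact ⟨⟨h1, h3⟩, h2, h4⟩
  rw [Finset.sum_congr rfl h1, Finset.sum_comm]
  refine Finset.sum_congr rfl fun s _ => ?_
  rw [← Finset.sum_filter, Finset.sum_const, nsmul_eq_mul, mul_one]

lemma sqrt_le_add_one {t : ℝ} (ht : 0 ≤ t) : Real.sqrt t ≤ t + 1 := by
  apply Real.sqrt_le_iff.2
  constructor <;> nlinarith

lemma prog_upper (P : Finset GaussianInt) (a c s : GaussianInt) (ha : a ≠ 0) (hc : c ≠ 0) (hac : IsCoprime a c)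
    (T : ℝ) (hT : 0 ≤ T) (hP : ∀ x ∈ P, a ∣ x ∧ c ∣ x + 1 ∧ (nn (x - s) : ℝ) ≤ T) :
    (P.card : ℝ) ≤ 32 * (T / (nn a * nn c) + 1) := by
  have h := (abs_le.1 (prog_count a c s ha hc hac T hT)).2
  have h1 : P.card ≤ {x : GaussianInt | a ∣ x ∧ c ∣ x + 1 ∧ (nn (x - s) : ℝ) ≤ T}.ncard := by
    rw [← Set.ncard_coe_finset]
    refine Set.ncard_le_ncard (fun x hx => hP x hx) ?_
    exact (nn_finite s T).subset (fun x hx => hx.2.2)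
  have h1' : (P.card : ℝ) ≤ ({x : GaussianInt | a ∣ x ∧ c ∣ x + 1 ∧ (nn (x - s) : ℝ) ≤ T}.ncard : ℝ) := by
    exact_mod_cast h1
  have ht : 0 ≤ T / (nn a * nn c : ℝ) := by positivity
  have := sqrt_le_add_one ht
  have := mul_le_mul_of_nonneg_right Real.pi_lt_four.le ht
  linarith

lemma cop_sum_le (Y : ℕ) (F : GaussianInt × GaussianInt → ℝ) (hF : ∀ s, 0 ≤ F s) :
    ∑ s ∈ cop Y, F s ≤ ∑ a ∈ box Y, ∑ c ∈ box Y, F (a, c) := by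
  rw [← Finset.sum_product']
  exact Finset.sum_le_sum_of_subset_of_nonneg (fun s hs => Finset.mem_product.2 ⟨(mem_cop.1 hs).1, (mem_cop.1 hs).2.1⟩) (fun s _ _ => hF s)

lemma gf_bound (P : Finset GaussianInt) (Y : ℕ) :
    ∑ x ∈ P, ((gg Y x : ℝ) * ff Y (x + 1)) ≤ 32 * (Y * (box Y).card * AA Y + (box Y).card ^ 2) := by
  classical
  rw [sum_swap P Y (fun a x => a ∣ x ∧ nn x ≤ Y * nn a) (fun c x => c ∣ x + 1)
    (fun a c x h1 h2 => coprime_of_dvd h1.1 h2) (gg Y) (fun x => ff Y (x + 1))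
    (fun x => by unfold gg; convert rfl) (fun x => by unfold ff; convert rfl)]
  have h : ∀ s ∈ cop Y, ((P.filter (fun x => (s.1 ∣ x ∧ nn x ≤ Y * nn s.1) ∧ s.2 ∣ x + 1)).card : ℝ) ≤
      32 * (Y * (1 / nn s.2) + 1) := by
    intro s hs
    rw [mem_cop, mem_box, mem_box] at hs
    have h1 := nn_posR hs.1.1
    have h2 := nn_posR hs.2.1.1
    refine (prog_upper _ s.1 s.2 0 hs.1.1 hs.2.1.1 hs.2.2 (Y * nn s.1) (by positivity) ?_).trans ?_
    · intro x hx
      rw [Finset.mem_filter] at hx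
      refine ⟨hx.2.1.1, hx.2.2, ?_⟩
      rw [sub_zero]; exact_mod_cast hx.2.1.2
    · apply le_of_eq
      field_simp
  refine le_trans (le_of_eq ?_) ((Finset.sum_le_sum h).trans ?_)
  · refine Finset.sum_congr rfl fun s _ => ?_
    congr!
  refine (cop_sum_le Y (fun s => 32 * (Y * (1 / nn s.2) + 1)) (fun s => by positivity)).trans ?_
  apply le_of_eq
  simp only [← Finset.mul_sum, Finset.sum_add_distrib, Finset.sum_const, nsmul_eq_mul, mul_one]
  unfold AA
  ring

lemma fg_bound (P : Finset GaussianInt) (Y : ℕ) :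
    ∑ x ∈ P, ((ff Y x : ℝ) * gg Y (x + 1)) ≤ 32 * (Y * (box Y).card * AA Y + (box Y).card ^ 2) := by
  classical
  rw [sum_swap P Y (fun a x => a ∣ x) (fun c x => c ∣ x + 1 ∧ nn (x + 1) ≤ Y * nn c)
    (fun a c x h1 h2 => coprime_of_dvd h1 h2.1) (ff Y) (fun x => gg Y (x + 1))
    (fun x => by unfold ff; convert rfl) (fun x => by unfold gg; convert rfl)]
  have h : ∀ s ∈ cop Y, ((P.filter (fun x => s.1 ∣ x ∧ s.2 ∣ x + 1 ∧ nn (x + 1) ≤ Y * nn s.2)).card : ℝ) ≤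
      32 * (Y * (1 / nn s.1) + 1) := by
    intro s hs
    rw [mem_cop, mem_box, mem_box] at hs
    have h1 := nn_posR hs.1.1
    have h2 := nn_posR hs.2.1.1
    refine (prog_upper _ s.1 s.2 (-1) hs.1.1 hs.2.1.1 hs.2.2 (Y * nn s.2) (by positivity) ?_).trans ?_
    · intro x hx
      rw [Finset.mem_filter] at hx
      refine ⟨hx.2.1, hx.2.2.1, ?_⟩
      rw [sub_neg_eq_add]; exact_mod_cast hx.2.2.2
    · apply le_of_eq
      field_simp
  refine le_trans (le_of_eq ?_) ((Finset.sum_le_sum h).trans ?_)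
  · refine Finset.sum_congr rfl fun s _ => ?_
    congr!
  refine (cop_sum_le Y (fun s => 32 * (Y * (1 / nn s.1) + 1)) (fun s => by positivity)).trans ?_
  apply le_of_eq
  simp only [← Finset.mul_sum, Finset.sum_add_distrib, Finset.sum_const, nsmul_eq_mul, mul_one]
  unfold AA
  ring

lemma ff_main (P : Finset GaussianInt) (X : ℝ) (hX : 0 ≤ X)
    (hP : ∀ x, x ∈ P ↔ x ≠ 0 ∧ x ≠ -1 ∧ (nn x : ℝ) ≤ X) (Y : ℕ) :
    |∑ x ∈ P, ((ff Y x : ℝ) * ff Y (x + 1)) - Real.pi * X * BB Y| ≤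
      18 * (Real.sqrt X * ((box Y).card * AA Y) + (box Y).card ^ 2) := by
  classical
  rw [sum_swap P Y (fun a x => a ∣ x) (fun c x => c ∣ x + 1) (fun a c x => coprime_of_dvd) (ff Y) (fun x => ff Y (x + 1))
    (fun x => by unfold ff; convert rfl) (fun x => by unfold ff; convert rfl)]
  unfold BB
  rw [Finset.mul_sum, ← Finset.sum_sub_distrib]
  refine (Finset.abs_sum_le_sum_abs _ _).trans ?_
  have h : ∀ s ∈ cop Y, |((P.filter (fun x => s.1 ∣ x ∧ s.2 ∣ x + 1)).card : ℝ) -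
      Real.pi * X * (1 / (nn s.1 * nn s.2))| ≤
      18 * (Real.sqrt X * ((1 / Real.sqrt (nn s.1)) * (1 / Real.sqrt (nn s.2))) + 1) := by
    intro s hs
    rw [mem_cop, mem_box, mem_box] at hs
    have h1 := nn_posR hs.1.1
    have h2 := nn_posR hs.2.1.1
    have h3 := prog_count s.1 s.2 0 hs.1.1 hs.2.1.1 hs.2.2 X hX
    have hfin : {x : GaussianInt | s.1 ∣ x ∧ s.2 ∣ x + 1 ∧ (nn (x - 0) : ℝ) ≤ X}.Finite :=
      (nn_finite 0 X).subset (fun x hx => hx.2.2)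
    rw [Set.ncard_eq_toFinset_card _ hfin] at h3
    set Q := P.filter (fun x => s.1 ∣ x ∧ s.2 ∣ x + 1) with hQ
    have hs1 : Q ⊆ hfin.toFinset := by
      intro x hx
      rw [hQ, Finset.mem_filter, hP] at hx
      simp only [Set.Finite.mem_toFinset, Set.mem_ofPred_eq, sub_zero]
      exact ⟨hx.2.1, hx.2.2, hx.1.2.2⟩
    have hs2 : hfin.toFinset ⊆ Q ∪ {0, -1} := by
      intro x hx
      simp only [Set.Finite.mem_toFinset, Set.mem_ofPred_eq, sub_zero] at hx
      simp only [Finset.mem_union, hQ, Finset.mem_filter, hP, Finset.mem_insert, Finset.mem_singleton]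
      tauto
    have c1 : (Q.card : ℝ) ≤ hfin.toFinset.card := by exact_mod_cast Finset.card_le_card hs1
    have c2 : (hfin.toFinset.card : ℝ) ≤ Q.card + 2 := by
      have := (Finset.card_le_card hs2).trans (Finset.card_union_le _ _)
      have h4 : ({0, -1} : Finset GaussianInt).card ≤ 2 := Finset.card_le_two
      exact_mod_cast this.trans (by omega)
    have h5 : Real.sqrt (X / (nn s.1 * nn s.2)) = Real.sqrt X * ((1 / Real.sqrt (nn s.1)) * (1 / Real.sqrt (nn s.2))) := by
      rw [Real.sqrt_div hX, Real.sqrt_mul h1.le, one_div_mul_one_div, mul_one_div]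
    have h6 : Real.pi * X * (1 / (nn s.1 * nn s.2)) = Real.pi * (X / (nn s.1 * nn s.2)) := by ring
    rw [← h5, h6]
    have h7 := Real.sqrt_nonneg (X / (nn s.1 * nn s.2))
    rw [abs_le] at h3 ⊢
    constructor <;> linarith
  refine (Finset.sum_le_sum h).trans ?_
  refine (cop_sum_le Y (fun s => 18 * (Real.sqrt X * ((1 / Real.sqrt (nn s.1)) * (1 / Real.sqrt (nn s.2))) + 1)) (fun s => by positivity)).trans ?_
  have hcs : (∑ a ∈ box Y, 1 / Real.sqrt (nn a)) * (∑ a ∈ box Y, 1 / Real.sqrt (nn a)) ≤ (box Y).card * AA Y := by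
    rw [← sq]
    refine sq_sum_le_card_mul_sum_sq.trans ?_
    unfold AA
    apply le_of_eq
    congr 1
    refine Finset.sum_congr rfl fun a _ => ?_
    rw [div_pow, Real.sq_sqrt (by positivity), one_pow]
  simp only [← Finset.mul_sum, Finset.sum_add_distrib, Finset.sum_const, nsmul_eq_mul, mul_one, ← Finset.sum_mul]
  have := mul_le_mul_of_nonneg_left hcs (Real.sqrt_nonneg X)
  nlinarith

lemma dd_main (P : Finset GaussianInt) (X : ℝ) (hX : 0 ≤ X)
    (hP : ∀ x, x ∈ P ↔ x ≠ 0 ∧ x ≠ -1 ∧ (nn x : ℝ) ≤ X) (Y : ℕ) (hY : Real.sqrt X + 1 ≤ Y) :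
    |∑ x ∈ P, ((dG x : ℝ) * dG (x + 1)) - 4 * Real.pi * X * BB Y| ≤
      300 * (Y * ((box Y).card * AA Y) + (box Y).card ^ 2) := by
  have hpt : ∀ x ∈ P, |(dG x : ℝ) * dG (x + 1) - 4 * (ff Y x * ff Y (x + 1))| ≤
      3 * (gg Y x * ff Y (x + 1)) + 2 * (ff Y x * gg Y (x + 1)) := by
    intro x hx
    rw [hP] at hx
    have hsx := Real.sqrt_nonneg X
    have hn : ‖GaussianInt.toComplex x‖ ≤ Real.sqrt X := by
      apply Real.le_sqrt_of_sq_le; rw [← nn_norm]; exact hx.2.2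
    have hn1 : ‖GaussianInt.toComplex (x + 1)‖ ≤ Y := by
      rw [map_add, map_one]
      refine (norm_add_le _ _).trans ?_
      rw [norm_one]; linarith
    have e1 : nn x ≤ Y ^ 2 := by
      have : (nn x : ℝ) ≤ (Y:ℝ) ^ 2 := by
        rw [nn_norm]
        have : ‖GaussianInt.toComplex x‖ ≤ Y := by linarith
        gcongr
      exact_mod_cast this
    have e2 : nn (x + 1) ≤ Y ^ 2 := by
      have : (nn (x + 1) : ℝ) ≤ (Y:ℝ) ^ 2 := by
        rw [nn_norm]
        gcongr
      exact_mod_cast this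
    have d1 : (dG x : ℝ) = 2 * ff Y x - gg Y x := by
      have := dG_eq Y x hx.1 e1
      have : (dG x : ℝ) + gg Y x = 2 * ff Y x := by exact_mod_cast this
      linarith
    have d2 : (dG (x + 1) : ℝ) = 2 * ff Y (x + 1) - gg Y (x + 1) := by
      have := dG_eq Y (x + 1) (fun h => hx.2.1 (eq_neg_of_add_eq_zero_left h)) e2
      have : (dG (x + 1) : ℝ) + gg Y (x + 1) = 2 * ff Y (x + 1) := by exact_mod_cast this
      linarith
    rw [d1, d2]
    have l2 : (gg Y (x + 1) : ℝ) ≤ ff Y (x + 1) := by exact_mod_cast gg_le_ff Y (x + 1)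
    have p1 : (0:ℝ) ≤ gg Y x := by positivity
    have p2 : (0:ℝ) ≤ gg Y (x + 1) := by positivity
    have p3 : (0:ℝ) ≤ ff Y x := by positivity
    have p4 : (0:ℝ) ≤ ff Y (x + 1) := by positivity
    have q1 := mul_nonneg p1 p2
    have q2 := mul_nonneg p1 p4
    have q3 := mul_nonneg p3 p2
    have q4 := mul_le_mul_of_nonneg_left l2 p1
    rw [abs_le]
    constructor <;> nlinarith
  have h1 := ff_main P X hX hP Y
  have h2 := gf_bound P Y
  have h3 := fg_bound P Y
  have h4 : |∑ x ∈ P, ((dG x : ℝ) * dG (x + 1)) - 4 * ∑ x ∈ P, ((ff Y x : ℝ) * ff Y (x + 1))| ≤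
      3 * ∑ x ∈ P, ((gg Y x : ℝ) * ff Y (x + 1)) + 2 * ∑ x ∈ P, ((ff Y x : ℝ) * gg Y (x + 1)) := by
    rw [Finset.mul_sum, ← Finset.sum_sub_distrib, Finset.mul_sum, Finset.mul_sum, ← Finset.sum_add_distrib]
    exact (Finset.abs_sum_le_sum_abs _ _).trans (Finset.sum_le_sum hpt)
  have h5 : Real.sqrt X * ((box Y).card * AA Y) ≤ Y * ((box Y).card * AA Y) := by
    have := AA_nonneg Y
    gcongr
    linarith
  have h6 : 0 ≤ Y * ((box Y).card * AA Y) := by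
    have := AA_nonneg Y
    positivity
  have h7 : (0:ℝ) ≤ ((box Y).card : ℝ) ^ 2 := by positivity
  rw [mul_assoc (Y : ℝ)] at h2 h3
  rw [abs_le] at h1 h4 ⊢
  constructor <;> nlinarith

lemma SGauss_eq : SGauss = SS := by
  unfold SGauss SS
  have h := tsum_subtype {z : GaussianInt | z ≠ 0} (fun z => ((Zsqrtd.norm z : ℝ) ^ 2)⁻¹)
  refine h.trans ?_
  congr 1
  ext z
  by_cases hz : z = 0
  · subst hz; simp [nn_zero]
  · rw [Set.indicator_of_mem (by exact hz), nn_real, one_div]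

lemma final_bound_s10 : ∃ K : ℝ, ∀ X : ℝ, 3 ≤ X → ∀ P : Finset GaussianInt,
    (∀ x, x ∈ P ↔ x ≠ 0 ∧ x ≠ -1 ∧ (nn x : ℝ) ≤ X) →
    |∑ x ∈ P, ((dG x : ℝ) * dG (x + 1)) - 4 * Real.pi ^ 3 / SS * X * Real.log X ^ 2| ≤
      K * (X * Real.log X) := by
  obtain ⟨C1, hC1, hA⟩ := AA_est
  obtain ⟨C2, hC2, hB⟩ := BB_est
  have hS := SS_pos
  have hpi := Real.pi_pos
  refine ⟨300 * 9 * (160 * (C1 + Real.pi) + 1600) + 16 * Real.pi * C2 + 128 * Real.pi ^ 3 / SS, ?_⟩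
  intro X hX P hP
  have hX0 : 0 < X := by linarith
  set Y : ℕ := ⌈Real.sqrt X⌉₊ + 1 with hYdef
  have hs1 : 1 ≤ Real.sqrt X := by rw [Real.one_le_sqrt]; linarith
  have hY1 : Real.sqrt X + 1 ≤ Y := by
    rw [hYdef]; push_cast; linarith [Nat.le_ceil (Real.sqrt X)]
  have hY2 : (Y:ℝ) ≤ 3 * Real.sqrt X := by
    rw [hYdef]; push_cast; linarith [Nat.ceil_lt_add_one (Real.sqrt_nonneg X)]
  have hYn : 1 ≤ Y := by omega
  have hYR : (1:ℝ) ≤ Y := by exact_mod_cast hYn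
  have hYsq : (Y:ℝ) ^ 2 ≤ 9 * X := by
    have := Real.sq_sqrt hX0.le
    nlinarith
  clear_value Y
  have hL : 1 ≤ Real.log X := by
    rw [Real.le_log_iff_exp_le hX0]
    linarith [Real.exp_one_lt_three]
  set L := Real.log X with hLdef
  have hl1 : L / 2 ≤ Real.log Y := by
    rw [hLdef, ← Real.log_sqrt hX0.le]
    exact Real.log_le_log (by linarith) (by linarith)
  have hl2 : Real.log Y ≤ 2 + L / 2 := by
    rw [hLdef, ← Real.log_sqrt hX0.le]
    refine (Real.log_le_log (by linarith) hY2).trans ?_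
    rw [Real.log_mul (by norm_num) (by linarith)]
    have := Real.log_le_sub_one_of_pos (by norm_num : (0:ℝ) < 3)
    linarith
  set l := Real.log Y with hldef
  have hl4 : 1 + l ≤ 4 * L := by linarith
  have hcard : ((box Y).card : ℝ) ≤ 40 * Y := by
    have h1 := (abs_le.1 (box_card Y)).2
    have h2 : Real.sqrt Y ≤ Y := by
      rw [Real.sqrt_le_left (by positivity)]; nlinarith
    nlinarith [Real.pi_lt_four]
  have hAA : AA Y ≤ (C1 + Real.pi) * (4 * L) := by
    have := (abs_le.1 (hA Y hYn)).2
    have h3 : AA Y ≤ (C1 + Real.pi) * (1 + l) := by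
      rw [← hldef] at this
      have hl0 : 0 ≤ l := by linarith
      nlinarith [mul_nonneg hC1.le hl0]
    exact h3.trans (by gcongr)
  have e1 : |∑ x ∈ P, ((dG x : ℝ) * dG (x + 1)) - 4 * Real.pi * X * BB Y| ≤
      300 * 9 * (160 * (C1 + Real.pi) + 1600) * (X * L) := by
    refine (dd_main P X hX0.le hP Y hY1).trans ?_
    have h1 : Y * ((box Y).card * AA Y) ≤ Y * ((40 * Y) * ((C1 + Real.pi) * (4 * L))) := by
      have := AA_nonneg Y
      gcongr
    have h2 : ((box Y).card : ℝ) ^ 2 ≤ (40 * Y) ^ 2 := by gcongr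
    calc 300 * (Y * ((box Y).card * AA Y) + ((box Y).card : ℝ) ^ 2)
        ≤ 300 * (Y * ((40 * Y) * ((C1 + Real.pi) * (4 * L))) + (40 * Y) ^ 2) := by gcongr
      _ = 300 * (Y:ℝ) ^ 2 * (160 * (C1 + Real.pi) * L + 1600 * 1) := by ring
      _ ≤ 300 * (9 * X) * (160 * (C1 + Real.pi) * L + 1600 * L) := by gcongr
      _ = _ := by ring
  have e2 : |4 * Real.pi * X * BB Y - 4 * Real.pi * X * (4 * Real.pi ^ 2 / SS * l ^ 2)| ≤
      16 * Real.pi * C2 * (X * L) := by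
    rw [← mul_sub, abs_mul, abs_of_pos (by positivity)]
    calc _ ≤ 4 * Real.pi * X * (C2 * (4 * L)) := by
          gcongr
          exact (hB Y hYn).trans (by gcongr)
      _ = _ := by ring
  have e3 : |4 * Real.pi * X * (4 * Real.pi ^ 2 / SS * l ^ 2) - 4 * Real.pi ^ 3 / SS * X * L ^ 2| ≤
      128 * Real.pi ^ 3 / SS * (X * L) := by
    have : 4 * Real.pi * X * (4 * Real.pi ^ 2 / SS * l ^ 2) - 4 * Real.pi ^ 3 / SS * X * L ^ 2 =
      16 * Real.pi ^ 3 / SS * X * ((l - L / 2) * (l + L / 2)) := by ring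
    rw [this, abs_mul, abs_of_pos (by positivity), abs_of_nonneg (mul_nonneg (by linarith) (by linarith))]
    calc _ ≤ 16 * Real.pi ^ 3 / SS * X * (2 * (4 * L)) := by
          gcongr <;> linarith
      _ = _ := by ring
  rw [abs_le] at *
  constructor <;> linarith [e1.1, e1.2, e2.1, e2.2, e3.1, e3.2]

/-- Equation (83), Gaussian-integer case of Theorem 2: as `X → +∞`,
`∑_{x ∈ ℤ[i] ∖ {0,-1}, N(x) ≤ X} d(x) d(x+1) = (4π³/S) · X (log X)² + O(X log X)`. -/
theorem binary_additive_divisor_gaussian :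
    (fun X : ℝ =>
        (∑' x : {x : GaussianInt // x ≠ 0 ∧ x ≠ -1 ∧ (Zsqrtd.norm x : ℝ) ≤ X},
            (dG x.1 * dG (x.1 + 1) : ℝ)) -
          4 * Real.pi ^ 3 / SGauss * X * Real.log X ^ 2)
      =O[Filter.atTop] fun X : ℝ => X * Real.log X := by
  obtain ⟨K, hK⟩ := final_bound_s10
  refine Asymptotics.IsBigO.of_bound K ?_
  filter_upwards [Filter.eventually_ge_atTop (3:ℝ)] with X hX
  have hfin : {x : GaussianInt | x ≠ 0 ∧ x ≠ -1 ∧ (nn x : ℝ) ≤ X}.Finite :=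
    (nn_finite 0 X).subset (fun x hx => by simpa using hx.2.2)
  have hmem : ∀ x, x ∈ hfin.toFinset ↔ x ≠ 0 ∧ x ≠ -1 ∧ (nn x : ℝ) ≤ X := by
    intro x; simp
  have hsum : (∑' x : {x : GaussianInt // x ≠ 0 ∧ x ≠ -1 ∧ (Zsqrtd.norm x : ℝ) ≤ X},
            (dG x.1 * dG (x.1 + 1) : ℝ)) = ∑ x ∈ hfin.toFinset, ((dG x : ℝ) * dG (x + 1)) := by
    rw [← Finset.tsum_subtype]
    have he : ∀ x : GaussianInt, (x ≠ 0 ∧ x ≠ -1 ∧ (Zsqrtd.norm x : ℝ) ≤ X) ↔ x ∈ hfin.toFinset := by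
      intro x; rw [hmem, nn_real]
    exact (Equiv.subtypeEquivRight he).tsum_eq
      (fun x : {x // x ∈ hfin.toFinset} => ((dG x.1 : ℝ) * dG (x.1 + 1)))
  have hlog : 0 ≤ Real.log X := Real.log_nonneg (by linarith)
  rw [hsum, SGauss_eq, Real.norm_eq_abs, Real.norm_of_nonneg (mul_nonneg (by linarith) hlog)]
  exact hK X hX _ hmem
end
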